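/- arXiv:2309.06696 — 3 statements merged into one kernel-verified Lean document; each statement's English description precedes it below -/
import Mathlib

section
/- There exist absolute constants C, c > 0 such that for all positive integers n and f, every n-vertex unweighted graph G admits a subgraph H with at most C·f·n·(log n)^c edges such that for every f-degree fault set F and all vertices u, v, dist_{H\F}(u,v) ≤ C·(log n)^c · dist_{G\F}(u,v); that is, H is an f-FD (C·(log n)^c)-spanner of G. -/
/-!
Let `λ = log₂ n`, and call a vertex set `U` dense if it spans more than about `f · |U| · log₂ |U|`
edges. The spanner `H` is a maximal subgraph of `G` without dense vertex sets; in particular the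
set of all vertices is not dense, which bounds the number of edges.

If `uv` is an edge of `G` missing from `H`, then `H + uv` has a dense set, and an inclusion-minimal
one, `U`, contains `u` and `v`. By minimality, no `S ⊆ U` with `|S| ≤ |U| / 2` has few edges to
`U \ S`: otherwise `S` and `U \ S` would span almost all edges of `U`, and one of them would be
dense because `log₂ |S| ≤ log₂ |U| - 1`. The cuts exceed the number of faults at `S`, so `U` still
has conductance `Ω(1 / λ)` after deleting both the faults and `uv`. Balls in `U` then grow
geometrically, so `u` and `v` are at distance `O(λ²)` in what remains, which is a part of `H`
avoiding the faults.
-/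

open SimpleGraph
open scoped ENNReal

/-- `F` has faulty-degree at most `f`: every vertex is incident to at most `f` edges of `F`. -/
def DegLE {V : Type} (F : Set (Sym2 V)) (f : ℕ) : Prop :=
  ∀ v : V, {e ∈ F | v ∈ e}.ncard ≤ f

/-- `H` is an `f`-faulty-degree `t`-spanner of `G` (unweighted distances, `∞` when
disconnected, real stretch factor `t`). -/
def IsFDSpanner {V : Type} (G H : SimpleGraph V) (f : ℕ) (t : ℝ) : Prop :=
  H ≤ G ∧ ∀ F : Set (Sym2 V), F ⊆ G.edgeSet → DegLE F f →
    ∀ u v : V,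
      ((H.deleteEdges F).edist u v : ℝ≥0∞) ≤
        ENNReal.ofReal t * ((G.deleteEdges F).edist u v : ℝ≥0∞)

open scoped Finset

section Interedges

variable {V : Type*} (G : SimpleGraph V) [DecidableRel G.Adj]

lemma card_interedges_comm (S T : Finset V) :
    #(G.interedges S T) = #(G.interedges T S) :=
  have := G.symm
  Rel.card_interedges_comm S T

variable [DecidableEq V] {S T U : Finset V}

lemma card_interedges_add_card_interedges_sdiff_left (hST : S ⊆ T) (U : Finset V) :
    #(G.interedges S U) + #(G.interedges (T \ S) U) = #(G.interedges T U) := by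
  rw [← Finset.card_union_of_disjoint (G.interedges_disjoint_left Finset.disjoint_sdiff U)]
  congr 1
  ext p
  have := @hST p.1
  simp only [Finset.mem_union, mem_interedges_iff, Finset.mem_sdiff]
  tauto

lemma card_interedges_add_card_interedges_sdiff_right (hST : S ⊆ T) (U : Finset V) :
    #(G.interedges U S) + #(G.interedges U (T \ S)) = #(G.interedges U T) := by
  simp only [card_interedges_comm G U]
  exact card_interedges_add_card_interedges_sdiff_left G hST U

lemma card_interedges_self_eq_add_sdiff (hSU : S ⊆ U) :
    #(G.interedges U U) = #(G.interedges S S) + 2 * #(G.interedges S (U \ S)) +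
      #(G.interedges (U \ S) (U \ S)) := by
  have hU := card_interedges_add_card_interedges_sdiff_left G hSU U
  have hS := card_interedges_add_card_interedges_sdiff_right G hSU S
  have hT := card_interedges_add_card_interedges_sdiff_right G hSU (U \ S)
  have hcomm := card_interedges_comm G S (U \ S)
  omega

lemma card_interedges_add_card_cut_le (hST : S ⊆ T)
    (hnbr : ∀ x ∈ S, ∀ y ∈ U, G.Adj x y → y ∈ T) (hSU : S ⊆ U) :
    #(G.interedges S U) + #(G.interedges S (U \ S)) ≤ #(G.interedges T U) := by
  rw [← card_interedges_add_card_interedges_sdiff_left G hST, Nat.add_le_add_iff_left]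
  have hcut : G.interedges S (U \ S) ⊆ G.interedges S (T \ S) := by
    rintro ⟨x, y⟩ hxy
    simp only [mk_mem_interedges_iff, Finset.mem_sdiff] at hxy ⊢
    exact ⟨hxy.1, ⟨hnbr x hxy.1 y hxy.2.1.1 hxy.2.2, hxy.2.1.2⟩, hxy.2.2⟩
  calc #(G.interedges S (U \ S))
    _ ≤ #(G.interedges S (T \ S)) := Finset.card_le_card hcut
    _ = #(G.interedges (T \ S) S) := card_interedges_comm G _ _
    _ ≤ #(G.interedges (T \ S) U) := Finset.card_le_card (G.interedges_mono subset_rfl hSU)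

end Interedges

section Faults

variable {V : Type} {F : Set (Sym2 V)} {f : ℕ}

protected lemma DegLE.insert (hF : DegLE F f) (e : Sym2 V) : DegLE (insert e F) (f + 1) := by
  intro v
  by_cases hv : v ∈ e
  · have hinsert : {x ∈ insert e F | v ∈ x} = insert e {x ∈ F | v ∈ x} := by grind
    rw [hinsert]
    exact (Set.ncard_insert_le _ _).trans (Nat.add_le_add_right (hF v) 1)
  · have hinsert : {x ∈ insert e F | v ∈ x} = {x ∈ F | v ∈ x} := by grind
    rw [hinsert]
    exact (hF v).trans (Nat.le_succ f)

lemma DegLE.card_filter_mk_mem_le [Finite V] (hF : DegLE F f) (x : V) (T : Finset V)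
    [DecidablePred fun y ↦ s(x, y) ∈ F] : #{y ∈ T | s(x, y) ∈ F} ≤ f := by
  rw [← Set.ncard_coe_finset]
  refine le_trans ?_ (hF x)
  refine Set.ncard_le_ncard_of_injOn (fun y ↦ s(x, y)) (fun y hy ↦ ?_)
    (fun y _ z _ h ↦ Sym2.congr_right.mp h) (Set.toFinite _)
  exact ⟨(Finset.mem_filter.mp hy).2, Sym2.mem_mk_left x y⟩

lemma DegLE.card_interedges_le [Finite V] (hF : DegLE F f) (G : SimpleGraph V)
    [DecidableRel G.Adj] [DecidableRel (G.deleteEdges F).Adj] (S T : Finset V) :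
    #(G.interedges S T) ≤ #((G.deleteEdges F).interedges S T) + f * #S := by
  classical
  simp only [interedges_def, Finset.card_filter, Finset.sum_product]
  rw [mul_comm, ← smul_eq_mul, ← Finset.sum_const, ← Finset.sum_add_distrib]
  refine Finset.sum_le_sum fun x _ ↦ ?_
  simp only [← Finset.card_filter]
  calc #{y ∈ T | G.Adj x y}
    _ ≤ #({y ∈ T | (G.deleteEdges F).Adj x y} ∪ {y ∈ T | s(x, y) ∈ F}) :=
      Finset.card_le_card fun y ↦ by
        simp only [Finset.mem_union, Finset.mem_filter, deleteEdges_adj]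
        tauto
    _ ≤ _ := (Finset.card_union_le _ _).trans
      (Nat.add_le_add_left (hF.card_filter_mk_mem_le x T) _)

end Faults

section Expander

open scoped Classical in
/-- `U` has conductance more than `1 / m` in `G`: any nonempty `S` with at most half the vertices
of `U` sends more than a `1 / m` fraction of its volume out of itself. Volumes and cuts only count
edges inside `U`, as ordered pairs. -/
def IsEdgeExpander {V : Type*} (G : SimpleGraph V) (U : Finset V) (m : ℕ) : Prop :=
  ∀ S ⊆ U, S.Nonempty → 2 * #S ≤ #U → #(G.interedges S U) < m * #(G.interedges S (U \ S))

lemma two_pow_mul_le_of_succ_mul_le {a : ℕ → ℕ} {m J : ℕ} (hm : 0 < m)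
    (ha : ∀ r < m * J, (m + 1) * a r ≤ m * a (r + 1)) : 2 ^ J * a 0 ≤ a (m * J) := by
  have hpow : ∀ r ≤ m * J, (m + 1) ^ r * a 0 ≤ m ^ r * a r := by
    intro r hr
    induction r with
    | zero => simp
    | succ r ih =>
      calc (m + 1) ^ (r + 1) * a 0 = (m + 1) * ((m + 1) ^ r * a 0) := by ring
        _ ≤ (m + 1) * (m ^ r * a r) := Nat.mul_le_mul_left _ (ih (by omega))
        _ = m ^ r * ((m + 1) * a r) := by ring
        _ ≤ m ^ r * (m * a (r + 1)) := Nat.mul_le_mul_left _ (ha r hr)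
        _ = m ^ (r + 1) * a (r + 1) := by ring
  have hbernoulli : 2 * m ^ m ≤ (m + 1) ^ m := by
    calc 2 * m ^ m = m ^ m + m * m ^ (m - 1) * 1 := by rw [mul_one, mul_pow_sub_one hm.ne', two_mul]
      _ ≤ (m + 1) ^ m := by exact_mod_cast pow_add_mul_le_add_pow m.zero_le (Nat.zero_le _) m
  refine Nat.le_of_mul_le_mul_left (c := m ^ (m * J)) ?_ (by positivity)
  calc m ^ (m * J) * (2 ^ J * a 0) = (2 * m ^ m) ^ J * a 0 := by rw [mul_pow, pow_mul]; ring
    _ ≤ ((m + 1) ^ m) ^ J * a 0 := by gcongr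
    _ ≤ m ^ (m * J) * a (m * J) := by rw [← pow_mul]; exact hpow _ le_rfl

variable {V : Type*} {G : SimpleGraph V} {U : Finset V} {m : ℕ} {u v : V}

open scoped Classical in
lemma IsEdgeExpander.card_lt_two_mul_card_closedBall (hU : IsEdgeExpander G U m) (hu : u ∈ U)
    {J : ℕ} (hJ : #U ^ 2 < 2 ^ J) : #U < 2 * #{x ∈ U | G.edist u x ≤ (m * J : ℕ)} := by
  let B (r : ℕ) : Finset V := {x ∈ U | G.edist u x ≤ r}
  by_contra! hsmall
  have hB_mono {r s : ℕ} (h : r ≤ s) : B r ⊆ B s := fun x hx ↦ by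
    simp only [B, Finset.mem_filter] at hx ⊢
    exact ⟨hx.1, hx.2.trans (by exact_mod_cast h)⟩
  have hBU (r : ℕ) : B r ⊆ U := Finset.filter_subset _ _
  have huB (r : ℕ) : u ∈ B r := Finset.mem_filter.mpr ⟨hu, by simp⟩
  have hexp {r : ℕ} (hr : r ≤ m * J) :
      #(G.interedges (B r) U) < m * #(G.interedges (B r) (U \ B r)) :=
    hU _ (hBU r) ⟨u, huB r⟩ (hsmall.trans' (by gcongr; exact hB_mono hr))
  have hnbr (r : ℕ) : ∀ x ∈ B r, ∀ y ∈ U, G.Adj x y → y ∈ B (r + 1) := by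
    intro x hx y hy hxy
    refine Finset.mem_filter.mpr ⟨hy, (SimpleGraph.edist_triangle (v := x)).trans ?_⟩
    push_cast
    exact add_le_add (Finset.mem_filter.mp hx).2 (edist_eq_one_iff_adj.mpr hxy).le
  have hm : 0 < m := Nat.pos_of_ne_zero fun hm ↦ by simpa [hm] using hexp (Nat.zero_le _)
  have hpos : 0 < #(G.interedges (B 0) U) :=
    calc 0 < #(G.interedges (B 0) (U \ B 0)) :=
          Nat.pos_of_mul_pos_left (Nat.zero_lt_of_lt (hexp (Nat.zero_le _)))
      _ ≤ _ := Finset.card_le_card (G.interedges_mono subset_rfl Finset.sdiff_subset)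
  have hgrow : 2 ^ J * #(G.interedges (B 0) U) ≤ #(G.interedges (B (m * J)) U) := by
    refine two_pow_mul_le_of_succ_mul_le (a := fun r ↦ #(G.interedges (B r) U)) hm fun r hr ↦ ?_
    calc (m + 1) * #(G.interedges (B r) U)
      _ ≤ m * (#(G.interedges (B r) U) + #(G.interedges (B r) (U \ B r))) := by
        linarith [hexp hr.le]
      _ ≤ m * #(G.interedges (B (r + 1)) U) := by
        gcongr
        exact card_interedges_add_card_cut_le G (hB_mono r.le_succ) (hnbr r) (hBU r)
  have hvol : #(G.interedges (B (m * J)) U) ≤ #U ^ 2 := by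
    rw [sq]
    exact (G.card_interedges_le_mul _ _).trans (by gcongr; exact hBU _)
  exact (hJ.trans_le ((Nat.le_mul_of_pos_right _ hpos).trans (hgrow.trans hvol))).false

theorem IsEdgeExpander.edist_le (hU : IsEdgeExpander G U m) (hu : u ∈ U) (hv : v ∈ U) :
    G.edist u v ≤ (4 * m * (Nat.log 2 #U + 1) : ℕ) := by
  classical
  have hJ : #U ^ 2 < 2 ^ (2 * (Nat.log 2 #U + 1)) := by
    rw [mul_comm 2, pow_mul]
    exact Nat.pow_lt_pow_left (Nat.lt_pow_succ_log_self one_lt_two _) two_ne_zero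
  let B (w : V) : Finset V := {x ∈ U | G.edist w x ≤ (m * (2 * (Nat.log 2 #U + 1)) : ℕ)}
  have hcard_u : #U < 2 * #(B u) := hU.card_lt_two_mul_card_closedBall hu hJ
  have hcard_v : #U < 2 * #(B v) := hU.card_lt_two_mul_card_closedBall hv hJ
  obtain ⟨x, hx⟩ := Finset.inter_nonempty_of_card_lt_card_add_card (t := B u) (u := B v)
    (Finset.filter_subset _ U) (Finset.filter_subset _ U) (by omega)
  simp only [B, Finset.mem_inter, Finset.mem_filter] at hx
  calc G.edist u v ≤ G.edist u x + G.edist x v := SimpleGraph.edist_triangle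
    _ ≤ (m * (2 * (Nat.log 2 #U + 1)) : ℕ) + (m * (2 * (Nat.log 2 #U + 1)) : ℕ) :=
      add_le_add hx.1.2 (edist_comm.trans_le hx.2.2)
    _ = _ := by push_cast; ring

end Expander

section LogDense

open scoped Classical in
/-- `G` is dense on `U`: the average degree of the subgraph of `G` induced on `U` exceeds
`d · log₂ |U|`. The spanner is a maximal subgraph without such sets. -/
def IsLogDense {V : Type*} (d : ℕ) (G : SimpleGraph V) (U : Finset V) : Prop :=
  d * #U * Nat.log 2 #U < #(G.interedges U U)

lemma not_isLogDense_bot {V : Type*} (d : ℕ) (U : Finset V) : ¬ IsLogDense d ⊥ U := by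
  simp [IsLogDense, interedges_def]

lemma natLog_add_one_le_of_mul_le {b s t : ℕ} (hb : 1 < b) (hs : s ≠ 0) (hst : b * s ≤ t) :
    Nat.log b s + 1 ≤ Nat.log b t := by
  rw [← Nat.log_mul_base hb hs, mul_comm]
  exact Nat.log_mono_right hst

open scoped Classical in
/-- Otherwise `S` or `U \ S` would itself be dense, as `log₂ |S| + 1 ≤ log₂ |U|`. -/
lemma IsLogDense.lt_two_mul_card_cut_of_minimal {V : Type*} {d : ℕ} {G : SimpleGraph V}
    {U S : Finset V} (hU : Minimal (IsLogDense d G) U) (hSU : S ⊆ U) (hS : S.Nonempty)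
    (hhalf : 2 * #S ≤ #U) : d * #S < 2 * #(G.interedges S (U \ S)) := by
  have hspos := hS.card_pos
  have hS_sparse : #(G.interedges S S) ≤ d * #S * Nat.log 2 #S :=
    not_lt.mp (hU.not_prop_of_lt (hSU.ssubset_of_ne (by rintro rfl; omega)))
  have hT_sparse : #(G.interedges (U \ S) (U \ S)) ≤ d * #(U \ S) * Nat.log 2 #(U \ S) :=
    not_lt.mp (hU.not_prop_of_lt (Finset.sdiff_ssubset hSU hS))
  have hU_dense : d * #U * Nat.log 2 #U < #(G.interedges U U) := hU.prop
  have hcard := Finset.card_sdiff_add_card_eq_card hSU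
  have hS_log : d * #S * (Nat.log 2 #S + 1) ≤ d * #S * Nat.log 2 #U := by
    gcongr
    exact natLog_add_one_le_of_mul_le one_lt_two hspos.ne' hhalf
  have hT_log : d * #(U \ S) * Nat.log 2 #(U \ S) ≤ d * #(U \ S) * Nat.log 2 #U := by
    gcongr
    exact Finset.sdiff_subset
  have hsplit := card_interedges_self_eq_add_sdiff G hSU
  rw [← hcard] at hU_dense hS_log hT_log
  linarith

open scoped Classical in
lemma IsLogDense.isEdgeExpander_of_minimal {V : Type*} {f : ℕ} {H K : SimpleGraph V} {U : Finset V}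
    (hU : Minimal (IsLogDense (4 * f) H) U) (hKH : K ≤ H)
    (hcut : ∀ S ⊆ U, S.Nonempty → 2 * #S ≤ #U → f * #S < #(K.interedges S (U \ S))) :
    IsEdgeExpander K U (4 * Nat.log 2 #U) := by
  intro S hSU hS hhalf
  have hinner : #(K.interedges S S) ≤ 4 * f * #S * Nat.log 2 #S :=
    calc #(K.interedges S S)
      _ ≤ #(H.interedges S S) :=
        Finset.card_le_card (Finset.monotone_filter_right _ fun _ _ h ↦ hKH h)
      _ ≤ _ := not_lt.mp (hU.not_prop_of_lt (hSU.ssubset_of_ne (by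
        rintro rfl
        have := hS.card_pos
        omega)))
  set c := #(K.interedges S (U \ S))
  have hfc : f * #S < c := hcut S hSU hS hhalf
  have hc : 0 < c := Nat.zero_lt_of_lt hfc
  calc #(K.interedges S U)
    _ = #(K.interedges S S) + c := (card_interedges_add_card_interedges_sdiff_right K hSU S).symm
    _ ≤ 4 * (f * #S) * Nat.log 2 #S + c := by linarith
    _ ≤ 4 * c * Nat.log 2 #S + c := by gcongr
    _ < 4 * c * (Nat.log 2 #S + 1) := by linarith
    _ ≤ 4 * c * Nat.log 2 #U := by
      gcongr
      exact natLog_add_one_le_of_mul_le one_lt_two hS.card_pos.ne' hhalf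
    _ = 4 * Nat.log 2 #U * c := by ring

lemma IsLogDense.mem_and_mem_of_sup_edge {V : Type*} {d : ℕ} {H : SimpleGraph V} {U : Finset V}
    {u v : V} (hU : IsLogDense d (H ⊔ edge u v) U) (hH : ¬ IsLogDense d H U) : u ∈ U ∧ v ∈ U := by
  classical
  by_contra huv
  refine hH (hU.trans_le (Finset.card_le_card ?_))
  rintro ⟨x, y⟩ hxy
  simp only [mk_mem_interedges_iff, sup_adj, edge_adj] at hxy ⊢
  grind

variable {V : Type} {H : SimpleGraph V} {U : Finset V} {u v : V} {f : ℕ}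

theorem IsLogDense.isEdgeExpander_deleteEdges_of_minimal [Finite V]
    (hU : Minimal (IsLogDense (4 * f) H) U) {F : Set (Sym2 V)} (hF : DegLE F f) :
    IsEdgeExpander (H.deleteEdges F) U (4 * Nat.log 2 #U) := by
  classical
  refine isEdgeExpander_of_minimal hU (deleteEdges_le F) fun S hSU hS hhalf ↦ ?_
  have hcut := lt_two_mul_card_cut_of_minimal hU hSU hS hhalf
  have hfaults := hF.card_interedges_le H S (U \ S)
  have hcut_faults : f * #S < #((H.deleteEdges F).interedges S (U \ S)) := by linarith
  convert hcut_faults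

theorem edist_deleteEdges_le_of_isLogDense_sup_edge [Fintype V]
    (hH : ∀ U, ¬ IsLogDense (4 * (f + 1)) H U)
    (hU : IsLogDense (4 * (f + 1)) (H ⊔ edge u v) U) {F : Set (Sym2 V)} (hF : DegLE F f) :
    (H.deleteEdges F).edist u v ≤
      (16 * Nat.log 2 (Fintype.card V) * (Nat.log 2 (Fintype.card V) + 1) : ℕ) := by
  obtain ⟨W, -, hW⟩ := exists_minimal_le_of_wellFoundedLT _ U hU
  obtain ⟨hu, hv⟩ := hW.prop.mem_and_mem_of_sup_edge (hH W)
  have hexp := IsLogDense.isEdgeExpander_deleteEdges_of_minimal hW (hF.insert s(u, v))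
  have hle : (H ⊔ edge u v).deleteEdges (insert s(u, v) F) ≤ H.deleteEdges F := by
    rw [deleteEdges_sup, deleteEdges_edge (Set.mem_insert _ _), sup_bot_eq]
    exact deleteEdges_anti (Set.subset_insert _ _)
  calc (H.deleteEdges F).edist u v
    _ ≤ ((H ⊔ edge u v).deleteEdges (insert s(u, v) F)).edist u v := edist_anti hle
    _ ≤ (4 * (4 * Nat.log 2 #W) * (Nat.log 2 #W + 1) : ℕ) := hexp.edist_le hu hv
    _ ≤ (16 * Nat.log 2 (Fintype.card V) * (Nat.log 2 (Fintype.card V) + 1) : ℕ) := by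
      have hlog : Nat.log 2 #W ≤ Nat.log 2 (Fintype.card V) :=
        Nat.log_mono_right (Finset.card_le_univ W)
      rw [← mul_assoc]
      exact_mod_cast Nat.mul_le_mul (Nat.mul_le_mul_left 16 hlog) (Nat.succ_le_succ hlog)

end LogDense

section Spanner

lemma edist_le_mul_edist_of_adj {V : Type*} {G H : SimpleGraph V} {t : ℕ∞} (ht : t ≠ 0)
    (hadj : ∀ u v, G.Adj u v → H.edist u v ≤ t) (u v : V) : H.edist u v ≤ t * G.edist u v := by
  have hwalk {x y : V} (p : G.Walk x y) : H.edist x y ≤ t * p.length := by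
    induction p with
    | nil => simp
    | cons hxy p ih =>
      rw [Walk.length_cons, Nat.cast_add_one, add_comm, mul_add, mul_one]
      exact SimpleGraph.edist_triangle.trans (add_le_add (hadj _ _ hxy) ih)
  by_cases huv : G.Reachable u v
  · obtain ⟨p, hp⟩ := huv.exists_walk_length_eq_edist
    exact hp ▸ hwalk p
  · rw [edist_eq_top_of_not_reachable huv, ENat.mul_top ht]
    exact le_top

variable {V : Type} {G H : SimpleGraph V} {f : ℕ}

lemma IsFDSpanner.mono {s t : ℝ} (hH : IsFDSpanner G H f s) (hst : s ≤ t) : IsFDSpanner G H f t :=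
  ⟨hH.1, fun F hFG hF u v ↦ (hH.2 F hFG hF u v).trans (by gcongr)⟩

lemma IsFDSpanner.of_edist_le {t : ℕ} (ht : 1 ≤ t) (hHG : H ≤ G)
    (hedge : ∀ u v, G.Adj u v → ¬ H.Adj u v → ∀ F : Set (Sym2 V), DegLE F f →
      (H.deleteEdges F).edist u v ≤ t) :
    IsFDSpanner G H f t := by
  refine ⟨hHG, fun F _ hF u v ↦ ?_⟩
  have hadj (x y : V) (hxy : (G.deleteEdges F).Adj x y) : (H.deleteEdges F).edist x y ≤ t := by
    rw [deleteEdges_adj] at hxy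
    by_cases hH : H.Adj x y
    · rw [edist_eq_one_iff_adj.mpr (deleteEdges_adj.mpr ⟨hH, hxy.2⟩)]
      exact_mod_cast ht
    · exact hedge x y hxy.1 hH F hF
  rw [ENNReal.ofReal_natCast]
  have ht_ne : (t : ℕ∞) ≠ 0 := Nat.cast_ne_zero.mpr (Nat.one_le_iff_ne_zero.mp ht)
  exact_mod_cast edist_le_mul_edist_of_adj ht_ne hadj u v

lemma isFDSpanner_bot_of_subsingleton [Subsingleton V] (G : SimpleGraph V) (f : ℕ) (t : ℝ) :
    IsFDSpanner G ⊥ f t :=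
  ⟨bot_le, fun F _ _ u v ↦ by simp [Subsingleton.elim u v]⟩

theorem exists_isFDSpanner_natLog [Fintype V] (G : SimpleGraph V) (f : ℕ) :
    ∃ H : SimpleGraph V,
      IsFDSpanner G H f
        (16 * Nat.log 2 (Fintype.card V) * (Nat.log 2 (Fintype.card V) + 1) : ℕ) ∧
      H.edgeSet.ncard ≤ 2 * (f + 1) * Fintype.card V * Nat.log 2 (Fintype.card V) := by
  classical
  rcases subsingleton_or_nontrivial V with _ | _
  · exact ⟨⊥, isFDSpanner_bot_of_subsingleton G f _, by simp⟩
  obtain ⟨H, -, hH⟩ := exists_maximal_ge_of_wellFoundedGT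
    (fun H ↦ H ≤ G ∧ ∀ U, ¬ IsLogDense (4 * (f + 1)) H U) ⊥ ⟨bot_le, not_isLogDense_bot _⟩
  obtain ⟨hHG, hsparse⟩ := hH.prop
  have hlog : 1 ≤ Nat.log 2 (Fintype.card V) := Nat.log_pos one_lt_two Fintype.one_lt_card
  refine ⟨H, .of_edist_le (Nat.one_le_iff_ne_zero.mpr (by positivity)) hHG ?_, ?_⟩
  · intro u v huv hnuv F hF
    obtain ⟨U, hU⟩ : ∃ U, IsLogDense (4 * (f + 1)) (H ⊔ edge u v) U := by
      by_contra! hdense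
      exact hH.not_prop_of_gt (lt_sup_edge H _ _ huv.ne hnuv)
        ⟨sup_le hHG ((edge_le_iff _).mpr (.inr huv)), hdense⟩
    exact edist_deleteEdges_le_of_isLogDense_sup_edge hsparse hU hF
  · have huniv : #(H.interedges .univ .univ) ≤
        4 * (f + 1) * Fintype.card V * Nat.log 2 (Fintype.card V) := not_lt.mp (hsparse .univ)
    have hcount : 2 * H.edgeSet.ncard = #(H.interedges .univ .univ) := by
      rw [Set.ncard_eq_toFinset_card', ← edgeFinset, two_mul_card_edgeFinset]
      rfl
    linarith

end Spanner

lemma natLog_two_le_log (n : ℕ) : (Nat.log 2 n : ℝ) ≤ 3 / 2 * Real.log n := by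
  have hlog : (Nat.log 2 n : ℝ) ≤ Real.log n / Real.log 2 := by
    simpa [Real.logb] using Real.natLog_le_logb n 2
  have hlog_two := Real.log_two_gt_d9
  rw [le_div_iff₀ (by linarith)] at hlog
  nlinarith [(Nat.log 2 n).cast_nonneg (α := ℝ)]

/-- There are absolute constants `C, c > 0` such that every `n`-vertex
unweighted graph has an `f`-FD `(C·(log n)^c)`-spanner with at most `C·f·n·(log n)^c` edges. -/
theorem fd_polylog_spanner_exists :
    ∃ C c : ℝ, 0 < C ∧ 0 < c ∧
      ∀ (n f : ℕ), 0 < n → 0 < f →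
        ∀ (V : Type) [Fintype V], Fintype.card V = n →
          ∀ G : SimpleGraph V,
            ∃ H : SimpleGraph V,
              IsFDSpanner G H f (C * Real.log n ^ c) ∧
              (H.edgeSet.ncard : ℝ) ≤ C * f * n * Real.log n ^ c := by
  refine ⟨72, 2, by norm_num, by norm_num, ?_⟩
  rintro n f - hf V _ rfl G
  obtain ⟨H, hspanner, hcard⟩ := exists_isFDSpanner_natLog G f
  rw [Real.rpow_two]
  set n := Fintype.card V
  have hlog_sq : (Nat.log 2 n : ℝ) ^ 2 ≤ 9 / 4 * Real.log n ^ 2 := by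
    calc (Nat.log 2 n : ℝ) ^ 2 ≤ (3 / 2 * Real.log n) ^ 2 := by gcongr; exact natLog_two_le_log n
      _ = _ := by ring
  have hlog_le : (Nat.log 2 n : ℝ) ≤ (Nat.log 2 n : ℝ) ^ 2 := by
    exact_mod_cast Nat.le_self_pow two_ne_zero _
  refine ⟨H, hspanner.mono ?_, ?_⟩
  · push_cast
    linarith
  · calc (H.edgeSet.ncard : ℝ) ≤ 2 * (f + 1) * n * Nat.log 2 n := by exact_mod_cast hcard
      _ ≤ 2 * (f + f) * n * (72 / 4 * Real.log n ^ 2) := by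
        gcongr
        · exact_mod_cast hf
        · linarith [sq_nonneg (Real.log n)]
      _ = 72 * f * n * Real.log n ^ 2 := by ring
end

section
/- There exists an absolute constant A > 0 such that for all positive integers n, k, f, every n-vertex undirected graph G with positive edge weights admits an f-FD (2k−1)-spanner H ⊆ G with at most f^{1−1/k} · n^{1+1/k} · (A·k)^k edges. -/
open SimpleGraph
open scoped ENNReal

/-- Weighted shortest-path distance with respect to edge weights `w`
(`∞` when there is no path). -/
noncomputable def wdist {V : Type} (G : SimpleGraph V) (w : Sym2 V → ℝ) (u v : V) : ℝ≥0∞ :=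
  ⨅ p : G.Walk u v, (p.edges.map fun e => ENNReal.ofReal (w e)).sum

/-!
The spanner `H` is built greedily: edges are scanned by increasing weight, and an edge `e` is kept
when some admissible fault set `B e` leaves the ends of `e` at hop distance more than `2k - 1` in
the current graph. Consequently every closed walk of length at most `2k` in `H` traverses an edge
`e` and, at another time, an edge of `B' e = B e ∪ {e}`: otherwise the rest of the walk would have
bypassed the last of its edges to be added.

To bound the number of edges, pass to a subgraph of minimum degree at least the density `δ` of `H`
(edges per vertex), with normalized adjacency matrix `N`, and put `T p = tr (N ^ (2p))`, the total
weight of closed walks of length `2p`. By a union bound over the positions of a blocked pair of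
edges, `T (p+1)` is at most `(2p+2)(2p+1)` times the weight of the walks with a blocked pair in
given positions. As every vertex meets at most `d = f + 1` edges of `B' e`, and the squared
entries of a column of `N` sum to at most `δ⁻¹`, the Cauchy-Schwarz inequality bounds this weight
by `√(d * T (p+1) * δ⁻¹ * T p)`. Hence `T (p+1) ≤ 16 k⁴ d δ⁻¹ * T p` for `p < k`. As `T 1 ≤ n δ⁻¹`
for `n` vertices, whereas `1 ≤ T k` since `1` is an eigenvalue of `N`, this gives
`δ ^ k ≤ n (16 k⁴ d) ^ (k - 1)`.
-/

section ClosedWalkSums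

open Matrix

variable {V R : Type*}

/-- The restriction of the weight matrix `N` to the undirected edges in `S`: all other entries are
replaced by `0`. -/
noncomputable def edgeRestrict [Zero R] (N : Matrix V V R) (S : Set (Sym2 V)) : Matrix V V R :=
  open scoped Classical in .of fun x y ↦ if s(x, y) ∈ S then N x y else 0

theorem edgeRestrict_univ [Zero R] (N : Matrix V V R) : edgeRestrict N Set.univ = N := by
  ext; simp [edgeRestrict]

theorem edgeRestrict_nonneg {N : Matrix V V ℝ} (hN : ∀ x y, 0 ≤ N x y) (S : Set (Sym2 V))
    (x y : V) : 0 ≤ edgeRestrict N S x y := by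
  simp only [edgeRestrict, of_apply]
  split_ifs <;> simp [hN]

theorem isSymm_edgeRestrict [Zero R] {N : Matrix V V R} (hN : N.IsSymm) (S : Set (Sym2 V)) :
    (edgeRestrict N S).IsSymm := by
  ext x y
  rw [transpose_apply, edgeRestrict, of_apply, of_apply, hN.apply, Sym2.eq_swap]

theorem sum_edgeRestrict_singleton [Fintype (Sym2 V)] [AddCommMonoid R] (N : Matrix V V R) :
    ∑ e, edgeRestrict N {e} = N := by
  classical
  ext x y
  simp only [Matrix.sum_apply, edgeRestrict, of_apply, Set.mem_singleton_iff]
  exact Fintype.sum_ite_eq s(x, y) fun _ ↦ N x y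

variable [Fintype V] [DecidableEq V]

theorem sum_prod_mul_eq_trace [CommSemiring R] (M : ℕ → Matrix V V R) (n : ℕ)
    (K : Matrix V V R) :
    ∑ w : Fin (n + 1) → V,
        (∏ i : Fin n, M i (w i.castSucc) (w i.succ)) * K (w (Fin.last n)) (w 0) =
      (((List.range n).map M).prod * K).trace := by
  induction n generalizing K with
  | zero =>
    rw [← (Equiv.funUnique (Fin 1) V).symm.sum_comp]
    simp [trace]
  | succ n ih =>
    rw [List.prod_range_succ, Matrix.mul_assoc, ← ih (M n * K),
      ← (Fin.snocEquiv fun _ : Fin (n + 2) ↦ V).sum_comp, Fintype.sum_prod_type_right]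
    refine Finset.sum_congr rfl fun w _ ↦ ?_
    rw [Matrix.mul_apply, Finset.mul_sum]
    refine Finset.sum_congr rfl fun z _ ↦ ?_
    have snoc_zero : Fin.snoc (α := fun _ ↦ V) w z 0 = w 0 := Fin.snoc_castSucc (i := 0) ..
    simp only [Fin.snocEquiv, Equiv.coe_fn_mk, Fin.prod_univ_castSucc, Fin.snoc_castSucc,
      Fin.succ_castSucc, Fin.succ_last, Fin.snoc_last, Fin.val_castSucc, Fin.val_last, snoc_zero,
      mul_assoc]

theorem sum_prod_eq_trace [CommSemiring R] (M : ℕ → Matrix V V R) (n : ℕ) :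
    ∑ w : Fin (n + 1) → V, ∏ i : Fin (n + 1), M i (w i) (w (i + 1)) =
      (((List.range (n + 1)).map M).prod).trace := by
  rw [List.prod_range_succ, ← sum_prod_mul_eq_trace]
  simp [Fin.prod_univ_castSucc, Fin.coeSucc_eq_succ]

open scoped Classical in
theorem trace_prod_edgeRestrict [CommSemiring R] (N : Matrix V V R) (S : ℕ → Set (Sym2 V))
    (n : ℕ) :
    (((List.range (n + 1)).map fun i ↦ edgeRestrict N (S i)).prod).trace =
      ∑ w : Fin (n + 1) → V,
        if ∀ i : Fin (n + 1), s(w i, w (i + 1)) ∈ S i then ∏ i, N (w i) (w (i + 1)) else 0 := by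
  rw [← sum_prod_eq_trace]
  simp only [edgeRestrict, of_apply, Finset.prod_ite_zero, Finset.mem_univ, true_imp_iff]

theorem trace_pow_eq_sum_prod [CommSemiring R] (N : Matrix V V R) (n : ℕ) :
    (N ^ (n + 1)).trace = ∑ w : Fin (n + 1) → V, ∏ i, N (w i) (w (i + 1)) := by
  simpa using (sum_prod_eq_trace (fun _ ↦ N) n).symm

theorem prod_range_map_two_marks {α : Type*} [Monoid α] {g : ℕ → α} {z : α} {b c : ℕ}
    (hg : ∀ i, i ≠ 0 → i ≠ b + 1 → g i = z) :
    ((List.range (b + c + 2)).map g).prod = g 0 * z ^ b * g (b + 1) * z ^ c := by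
  have first : ∀ m ≤ b, ((List.range (m + 1)).map g).prod = g 0 * z ^ m := by
    intro m hm
    induction m with
    | zero => simp
    | succ m ih =>
      rw [List.prod_range_succ, ih (by omega), hg (m + 1) (by omega) (by omega), pow_succ,
        mul_assoc]
  induction c with
  | zero => rw [add_zero, List.prod_range_succ, first b le_rfl, pow_zero, mul_one]
  | succ c ih =>
    rw [← add_assoc, add_right_comm, List.prod_range_succ, ih,
      hg (b + c + 2) (by omega) (by omega), pow_succ, mul_assoc]

/-- The total weight of the closed walks of length `b + c + 2` in which the edge traversed after a
gap of `b` steps from the first edge `e` belongs to `B e`. The walks are split at these two edges,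
so that the weight becomes a sum over `e` of traces of matrix products. -/
noncomputable def blockedTrace [CommSemiring R] (N : Matrix V V R) (B : Sym2 V → Set (Sym2 V))
    (b c : ℕ) : R :=
  ∑ e, (edgeRestrict N {e} * N ^ b * edgeRestrict N (B e) * N ^ c).trace

open scoped Classical in
theorem blockedTrace_eq_sum_closedWalk_zero [CommSemiring R] (N : Matrix V V R)
    (B : Sym2 V → Set (Sym2 V)) {m : ℕ} (b : Fin (m + 1)) :
    blockedTrace N B b (m - b) =
      ∑ w : Fin (m + 2) → V, if s(w b.succ, w (b.succ + 1)) ∈ B s(w 0, w 1) then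
        ∏ i, N (w i) (w (i + 1)) else 0 := by
  let S (e : Sym2 V) (i : ℕ) : Set (Sym2 V) :=
    if i = 0 then {e} else if i = b + 1 then B e else Set.univ
  have S_iff (e : Sym2 V) (w : Fin (m + 2) → V) : (∀ i : Fin (m + 2), s(w i, w (i + 1)) ∈ S e i) ↔
      s(w 0, w 1) = e ∧ s(w b.succ, w (b.succ + 1)) ∈ B e := by
    refine ⟨fun h ↦ ⟨by simpa [S] using h 0, by simpa [S] using h b.succ⟩, fun h i ↦ ?_⟩
    rcases eq_or_ne i 0 with rfl | hi
    · simpa [S] using h.1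
    rcases eq_or_ne i b.succ with rfl | hib
    · simpa [S] using h.2
    have hi' : (i : ℕ) ≠ b + 1 := fun h ↦ hib (Fin.ext h)
    simp [S, hi, hi']
  have trace_eq (e : Sym2 V) :
      (edgeRestrict N {e} * N ^ (b : ℕ) * edgeRestrict N (B e) * N ^ (m - b)).trace =
        ∑ w : Fin (m + 2) → V, if s(w 0, w 1) = e ∧ s(w b.succ, w (b.succ + 1)) ∈ B e then
          ∏ i, N (w i) (w (i + 1)) else 0 := by
    have := prod_range_map_two_marks (g := fun i ↦ edgeRestrict N (S e i)) (z := N) (b := b)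
      (c := m - b) fun i h0 hb ↦ by simp [S, h0, hb, edgeRestrict_univ]
    rw [show (b : ℕ) + (m - b) + 2 = m + 1 + 1 by omega] at this
    simp_rw [← S_iff, ← trace_prod_edgeRestrict, this]
    simp [S]
  simp_rw [blockedTrace, trace_eq, ite_and]
  rw [Finset.sum_comm]
  simp

open scoped Classical in
theorem blockedTrace_eq_sum_closedWalk [CommSemiring R] (N : Matrix V V R)
    (B : Sym2 V → Set (Sym2 V)) {m : ℕ} (i : Fin (m + 2)) (b : Fin (m + 1)) :
    blockedTrace N B b (m - b) =
      ∑ w : Fin (m + 2) → V,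
        if s(w (i + b.succ), w (i + b.succ + 1)) ∈ B s(w i, w (i + 1)) then
          ∏ l, N (w l) (w (l + 1)) else 0 := by
  rw [blockedTrace_eq_sum_closedWalk_zero, ← ((Equiv.addLeft i).arrowCongr (.refl V)).symm.sum_comp]
  refine Finset.sum_congr rfl fun w _ ↦ ?_
  have rotate_prod : ∏ l, N (w (i + l)) (w (i + l + 1)) = ∏ l, N (w l) (w (l + 1)) :=
    Equiv.prod_comp (Equiv.addLeft i) fun l ↦ N (w l) (w (l + 1))
  simp [← add_assoc, rotate_prod]

/-- A family `B` of edge sets blocks the closed walks of length `n + 1` of a relation `r` if every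
such walk, encoded as a cyclic sequence of vertices, traverses at two different times an edge `e`
and an edge in `B e`. -/
def BlocksClosedWalks (B : Sym2 V → Set (Sym2 V)) (r : V → V → Prop) (n : ℕ) : Prop :=
  ∀ w : Fin (n + 1) → V, (∀ i, r (w i) (w (i + 1))) →
    ∃ i j, i ≠ j ∧ s(w j, w (j + 1)) ∈ B s(w i, w (i + 1))

theorem trace_pow_le_sum_blockedTrace {N : Matrix V V ℝ} (hN : ∀ x y, 0 ≤ N x y)
    {B : Sym2 V → Set (Sym2 V)} {m : ℕ} (hB : BlocksClosedWalks B (N · · ≠ 0) (m + 1)) :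
    (N ^ (m + 2)).trace ≤ (m + 2) * ∑ b : Fin (m + 1), blockedTrace N B b (m - b) := by
  classical
  let weight (w : Fin (m + 2) → V) : ℝ := ∏ l, N (w l) (w (l + 1))
  let blockedWeight (w : Fin (m + 2) → V) (i : Fin (m + 2)) (b : Fin (m + 1)) : ℝ :=
    if s(w (i + b.succ), w (i + b.succ + 1)) ∈ B s(w i, w (i + 1)) then weight w else 0
  have weight_nonneg w : 0 ≤ weight w := Finset.prod_nonneg fun _ _ ↦ hN _ _
  have blockedWeight_nonneg w i b : 0 ≤ blockedWeight w i b := by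
    unfold blockedWeight; split_ifs <;> simp [weight_nonneg]
  have union_bound w : weight w ≤ ∑ i, ∑ b, blockedWeight w i b := by
    by_cases hw : ∀ i, N (w i) (w (i + 1)) ≠ 0
    · obtain ⟨i, j, hij, hmem⟩ := hB w hw
      obtain ⟨b, hb⟩ := Fin.exists_succ_eq.mpr (sub_ne_zero.mpr hij.symm)
      obtain rfl : i + b.succ = j := by simp [hb]
      calc weight w = blockedWeight w i b := (if_pos hmem).symm
        _ ≤ ∑ b, blockedWeight w i b :=
          Finset.single_le_sum (fun b _ ↦ blockedWeight_nonneg w i b) (Finset.mem_univ b)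
        _ ≤ ∑ i, ∑ b, blockedWeight w i b :=
          Finset.single_le_sum (f := fun i ↦ ∑ b, blockedWeight w i b)
            (fun i _ ↦ Finset.sum_nonneg fun b _ ↦ blockedWeight_nonneg w i b) (Finset.mem_univ i)
    · push Not at hw
      obtain ⟨i, hi⟩ := hw
      rw [show weight w = 0 from Finset.prod_eq_zero (Finset.mem_univ i) hi]
      exact Finset.sum_nonneg fun i _ ↦ Finset.sum_nonneg fun b _ ↦ blockedWeight_nonneg w i b
  calc (N ^ (m + 2)).trace = ∑ w, weight w := trace_pow_eq_sum_prod N (m + 1)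
    _ ≤ ∑ w, ∑ i, ∑ b, blockedWeight w i b := Finset.sum_le_sum fun w _ ↦ union_bound w
    _ = ∑ i, ∑ b, ∑ w, blockedWeight w i b := by
      rw [Finset.sum_comm]
      exact Finset.sum_congr rfl fun i _ ↦ Finset.sum_comm
    _ = ∑ _i : Fin (m + 2), ∑ b : Fin (m + 1), blockedTrace N B b (m - b) :=
      Finset.sum_congr rfl fun i _ ↦ Finset.sum_congr rfl fun b _ ↦
        (blockedTrace_eq_sum_closedWalk N B i b).symm
    _ = (m + 2) * ∑ b : Fin (m + 1), blockedTrace N B b (m - b) := by simp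

theorem blockedTrace_comm [CommSemiring R] {N : Matrix V V R} (hN : N.IsSymm)
    (B : Sym2 V → Set (Sym2 V)) (b c : ℕ) : blockedTrace N B b c = blockedTrace N B c b := by
  refine Finset.sum_congr rfl fun e _ ↦ ?_
  rw [← trace_transpose]
  simp only [transpose_mul, (hN.pow _).eq, (isSymm_edgeRestrict hN _).eq, ← Matrix.mul_assoc]
  rw [trace_mul_comm]
  simp only [← Matrix.mul_assoc]

end ClosedWalkSums

section TraceRecursion

open Matrix

variable {V : Type*} [Fintype V]

open scoped Classical in
theorem sum_sq_sum_ite_mem_le {ι α : Type*} [Fintype ι] [Fintype α] {x : ι → ℝ}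
    (hx : ∀ i, 0 ≤ x i) {S : ι → Set α} {f : ℕ} (hS : ∀ i, (S i).ncard ≤ f) :
    ∑ a, (∑ i, if a ∈ S i then x i else 0) ^ 2 ≤ f * (∑ i, x i) ^ 2 := by
  have sum_le a : (∑ i, if a ∈ S i then x i else 0) ≤ ∑ i, x i :=
    Finset.sum_le_sum fun i _ ↦ by split_ifs <;> simp [hx]
  have sum_nonneg a : 0 ≤ ∑ i, if a ∈ S i then x i else 0 :=
    Finset.sum_nonneg fun i _ ↦ by split_ifs <;> simp [hx]
  have card_le i : Finset.card {a | a ∈ S i} ≤ f := by simpa [← Set.ncard_coe_finset] using hS i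
  calc ∑ a, (∑ i, if a ∈ S i then x i else 0) ^ 2
      ≤ ∑ a, (∑ i, if a ∈ S i then x i else 0) * ∑ i, x i := Finset.sum_le_sum fun a _ ↦ by
        rw [sq]; exact mul_le_mul_of_nonneg_left (sum_le a) (sum_nonneg a)
    _ = (∑ i, Finset.card {a | a ∈ S i} * x i) * ∑ i, x i := by
      rw [← Finset.sum_mul, Finset.sum_comm]
      simp [← Finset.sum_filter]
    _ ≤ (∑ i, f * x i) * ∑ i, x i := by
      gcongr with i
      · exact Finset.sum_nonneg fun i _ ↦ hx i
      · exact hx i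
      · exact card_le i
    _ = f * (∑ i, x i) ^ 2 := by rw [← Finset.mul_sum]; ring

theorem sq_sum_trace_mul_edgeRestrict_mul_le {ι : Type*} [Fintype ι] {X : ι → Matrix V V ℝ}
    (hX : ∀ i x y, 0 ≤ X i x y) {S : ι → Set (Sym2 V)} {f : ℕ}
    (hS : ∀ i y, {y' | s(y, y') ∈ S i}.ncard ≤ f) {N : Matrix V V ℝ} {D : ℝ}
    (hN : ∀ y', ∑ y, N y y' ^ 2 ≤ D) (Z : Matrix V V ℝ) :
    (∑ i, (X i * edgeRestrict N (S i) * Z).trace) ^ 2 ≤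
      (f * ∑ x, ∑ y, (∑ i, X i) x y ^ 2) * (D * ∑ x, ∑ y, Z x y ^ 2) := by
  classical
  let c (x y y' : V) : ℝ := ∑ i, if s(y, y') ∈ S i then X i x y else 0
  have expand : ∑ i, (X i * edgeRestrict N (S i) * Z).trace =
      ∑ q : V × V × V, c q.1 q.2.1 q.2.2 * (N q.2.1 q.2.2 * Z q.2.2 q.1) := by
    simp only [Fintype.sum_prod_type, trace, diag_apply, Matrix.mul_assoc, Matrix.mul_apply,
      edgeRestrict, of_apply, c, Finset.sum_mul, Finset.mul_sum, ite_mul, mul_ite, zero_mul,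
      mul_zero]
    rw [Finset.sum_comm]
    refine Finset.sum_congr rfl fun x _ ↦ ?_
    rw [Finset.sum_comm]
    exact Finset.sum_congr rfl fun y _ ↦ Finset.sum_comm
  have sum_c_sq : ∑ q : V × V × V, c q.1 q.2.1 q.2.2 ^ 2 ≤ f * ∑ x, ∑ y, (∑ i, X i) x y ^ 2 := by
    simp only [Fintype.sum_prod_type, Finset.mul_sum, Matrix.sum_apply]
    exact Finset.sum_le_sum fun x _ ↦ Finset.sum_le_sum fun y _ ↦
      sum_sq_sum_ite_mem_le (fun i ↦ hX i x y) fun i ↦ hS i y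
  have sum_mul_sq : ∑ q : V × V × V, (N q.2.1 q.2.2 * Z q.2.2 q.1) ^ 2 ≤
      D * ∑ y', ∑ x, Z y' x ^ 2 := by
    rw [Finset.sum_comm, Finset.mul_sum, Fintype.sum_prod_type]
    refine Finset.sum_le_sum fun x _ ↦ ?_
    rw [Fintype.sum_prod_type_right, Finset.mul_sum]
    refine Finset.sum_le_sum fun y' _ ↦ ?_
    simp only [mul_pow, ← Finset.sum_mul]
    exact mul_le_mul_of_nonneg_right (hN y') (sq_nonneg _)
  rw [expand]
  refine (Finset.sum_mul_sq_le_sq_mul_sq ..).trans ?_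
  gcongr

theorem matrix_mul_apply_nonneg {A B : Matrix V V ℝ} (hA : ∀ x y, 0 ≤ A x y)
    (hB : ∀ x y, 0 ≤ B x y) (x y : V) : 0 ≤ (A * B) x y :=
  Finset.sum_nonneg fun z _ ↦ mul_nonneg (hA x z) (hB z y)

theorem one_le_sum_sq_of_mulVec_eq_self {M : Matrix V V ℝ} {v : V → ℝ} (hv : v ≠ 0)
    (hM : M *ᵥ v = v) : 1 ≤ ∑ x, ∑ y, M x y ^ 2 := by
  have sum_pos : 0 < ∑ x, v x ^ 2 := by
    obtain ⟨x, hx⟩ := Function.ne_iff.mp hv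
    exact Finset.sum_pos' (fun x _ ↦ sq_nonneg _) ⟨x, Finset.mem_univ x, sq_pos_of_ne_zero hx⟩
  refine le_of_mul_le_mul_right ?_ sum_pos
  calc 1 * ∑ x, v x ^ 2 = ∑ x, (∑ y, M x y * v y) ^ 2 := by
        rw [one_mul]
        exact Finset.sum_congr rfl fun x _ ↦ congrArg (· ^ 2) (congrFun hM x).symm
    _ ≤ ∑ x, (∑ y, M x y ^ 2) * ∑ y, v y ^ 2 :=
      Finset.sum_le_sum fun x _ ↦ Finset.sum_mul_sq_le_sq_mul_sq ..
    _ = (∑ x, ∑ y, M x y ^ 2) * ∑ x, v x ^ 2 := (Finset.sum_mul ..).symm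

theorem trace_pow_two_mul [DecidableEq V] {N : Matrix V V ℝ} (hN : N.IsSymm) (m : ℕ) :
    (N ^ (2 * m)).trace = ∑ x, ∑ y, (N ^ m) x y ^ 2 := by
  simp only [two_mul, pow_add, trace, diag_apply, Matrix.mul_apply, sq]
  exact Finset.sum_congr rfl fun x _ ↦ Finset.sum_congr rfl fun y _ ↦ by rw [(hN.pow m).apply x y]

variable [DecidableEq V]

theorem sq_blockedTrace_le {N : Matrix V V ℝ} (hN : N.IsSymm) (hN₀ : ∀ x y, 0 ≤ N x y) {D : ℝ}
    (hD : ∀ y', ∑ y, N y y' ^ 2 ≤ D) {B : Sym2 V → Set (Sym2 V)} {f : ℕ}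
    (hB : ∀ e y, {y' | s(y, y') ∈ B e}.ncard ≤ f) (a b : ℕ) :
    blockedTrace N B b (a + b + a) ^ 2 ≤
      f * (N ^ (2 * (a + b + 1))).trace * (D * (N ^ (2 * (a + b))).trace) := by
  -- Moving `a` of the final steps to the front makes the part ending at the first marked edge and
  -- its gap one step longer than the part after the second one, as the right-hand side requires.
  have rotate : blockedTrace N B b (a + b + a) =
      ∑ e, (N ^ a * edgeRestrict N {e} * N ^ b * edgeRestrict N (B e) * N ^ (a + b)).trace := by
    refine Finset.sum_congr rfl fun e _ ↦ ?_
    rw [pow_add _ (a + b), ← Matrix.mul_assoc, trace_mul_comm]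
    simp only [Matrix.mul_assoc]
  have sum_eq : ∑ e, N ^ a * edgeRestrict N {e} * N ^ b = N ^ (a + b + 1) := by
    rw [← Finset.sum_mul, ← Finset.mul_sum, sum_edgeRestrict_singleton, ← pow_succ, ← pow_add,
      add_right_comm]
  have nonneg e : ∀ x y, 0 ≤ (N ^ a * edgeRestrict N {e} * N ^ b) x y :=
    matrix_mul_apply_nonneg
      (matrix_mul_apply_nonneg (pow_apply_nonneg hN₀ a) (edgeRestrict_nonneg hN₀ _))
      (pow_apply_nonneg hN₀ b)
  rw [rotate, trace_pow_two_mul hN, trace_pow_two_mul hN, ← sum_eq]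
  exact sq_sum_trace_mul_edgeRestrict_mul_le nonneg hB hD _

theorem trace_pow_succ_le_of_blocksClosedWalks {N : Matrix V V ℝ} (hN : N.IsSymm)
    (hN₀ : ∀ x y, 0 ≤ N x y) {D : ℝ} (hD₀ : 0 ≤ D) (hD : ∀ y', ∑ y, N y y' ^ 2 ≤ D)
    {B : Sym2 V → Set (Sym2 V)} {f : ℕ} (hB : ∀ e y, {y' | s(y, y') ∈ B e}.ncard ≤ f) {p : ℕ}
    (hBN : BlocksClosedWalks B (N · · ≠ 0) (2 * p + 1)) :
    (N ^ (2 * (p + 1))).trace ≤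
      ((2 * p + 2) * (2 * p + 1)) ^ 2 * f * D * (N ^ (2 * p)).trace := by
  set T := (N ^ (2 * (p + 1))).trace
  set T' := (N ^ (2 * p)).trace
  have hT : 0 ≤ T := by simp only [T, trace_pow_two_mul hN]; positivity
  have hT' : 0 ≤ T' := by simp only [T', trace_pow_two_mul hN]; positivity
  have short_gap (b : ℕ) (hb : b ≤ p) : blockedTrace N B b (2 * p - b) ≤ √(f * T * (D * T')) := by
    obtain ⟨a, rfl⟩ := Nat.exists_eq_add_of_le' hb
    rw [show 2 * (a + b) - b = a + b + a by omega]
    exact Real.le_sqrt_of_sq_le (sq_blockedTrace_le hN hN₀ hD hB a b)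
  have any_gap (b : Fin (2 * p + 1)) :
      blockedTrace N B b (2 * p - b) ≤ √(f * T * (D * T')) := by
    rcases le_or_gt b.1 p with hb | hb
    · exact short_gap b hb
    · rw [blockedTrace_comm hN]
      convert short_gap (2 * p - b) (by omega) using 2
      omega
  have T_le : T ≤ (2 * p + 2) * (2 * p + 1) * √(f * T * (D * T')) := by
    calc T ≤ ((2 * p : ℕ) + 2) * ∑ b : Fin (2 * p + 1), blockedTrace N B b (2 * p - b) :=
          trace_pow_le_sum_blockedTrace hN₀ hBN
      _ ≤ ((2 * p : ℕ) + 2) * ∑ _b : Fin (2 * p + 1), √(f * T * (D * T')) := by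
        gcongr with b
        exact any_gap b
      _ = (2 * p + 2) * (2 * p + 1) * √(f * T * (D * T')) := by
        rw [Finset.sum_const, Finset.card_univ, Fintype.card_fin, nsmul_eq_mul]
        push_cast
        ring
  rcases hT.eq_or_lt with hT₀ | hT₀
  · rw [← hT₀]; positivity
  · refine le_of_mul_le_mul_left ?_ hT₀
    calc T * T = T ^ 2 := (sq T).symm
      _ ≤ ((2 * p + 2) * (2 * p + 1) * √(f * T * (D * T'))) ^ 2 := by gcongr
      _ = T * (((2 * p + 2) * (2 * p + 1)) ^ 2 * f * D * T') := by
        rw [mul_pow, Real.sq_sqrt (by positivity)]; ring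

theorem trace_pow_le_of_blocksClosedWalks {N : Matrix V V ℝ} (hN : N.IsSymm)
    (hN₀ : ∀ x y, 0 ≤ N x y) {D : ℝ} (hD₀ : 0 ≤ D) (hD : ∀ y', ∑ y, N y y' ^ 2 ≤ D)
    {B : Sym2 V → Set (Sym2 V)} {f : ℕ} (hB : ∀ e y, {y' | s(y, y') ∈ B e}.ncard ≤ f) {k : ℕ}
    (hBN : ∀ n < 2 * k, BlocksClosedWalks B (N · · ≠ 0) n) {p : ℕ} (hp : p < k) :
    (N ^ (2 * (p + 1))).trace ≤ Fintype.card V * D * (16 * k ^ 4 * f * D) ^ p := by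
  induction p with
  | zero =>
    rw [zero_add, trace_pow_two_mul hN, pow_one, Finset.sum_comm, pow_zero, mul_one, ← nsmul_eq_mul]
    exact Finset.sum_le_card_nsmul _ _ _ fun y' _ ↦ hD y'
  | succ p ih =>
    have hpk : (p : ℝ) + 1 + 1 ≤ k := mod_cast hp
    have coeff_le : ((2 * (p + 1) + 2) * (2 * (p + 1) + 1) : ℝ) ^ 2 ≤ 16 * k ^ 4 := by
      calc ((2 * (p + 1) + 2) * (2 * (p + 1) + 1) : ℝ) ^ 2 ≤ (2 * k * (2 * k)) ^ 2 := by
            gcongr <;> linarith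
        _ = (16 * k ^ 4 : ℝ) := by ring
    calc (N ^ (2 * (p + 1 + 1))).trace
        ≤ ((2 * (p + 1) + 2) * (2 * (p + 1) + 1)) ^ 2 * f * D * (N ^ (2 * (p + 1))).trace := by
          exact_mod_cast
            trace_pow_succ_le_of_blocksClosedWalks hN hN₀ hD₀ hD hB (hBN _ (by omega))
      _ ≤ 16 * k ^ 4 * f * D * (Fintype.card V * D * (16 * k ^ 4 * f * D) ^ p) := by
        gcongr
        · rw [trace_pow_two_mul hN]; positivity
        · exact ih (by omega)
      _ = Fintype.card V * D * (16 * k ^ 4 * f * D) ^ (p + 1) := by ring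

end TraceRecursion

section NormalizedAdjacency

open Matrix

variable {V : Type*} [Fintype V] {G : SimpleGraph V} [DecidableRel G.Adj]

/-- The normalized adjacency matrix `D^(-1/2) A D^(-1/2)` of a graph, where `A` is the adjacency
matrix and `D` the diagonal matrix of degrees; its top eigenvalue is `1`. Rows and columns of
isolated vertices vanish. -/
noncomputable def normalizedAdjMatrix (G : SimpleGraph V) [DecidableRel G.Adj] : Matrix V V ℝ :=
  .of fun x y ↦ if G.Adj x y then (√(G.degree x) * √(G.degree y))⁻¹ else 0

theorem isSymm_normalizedAdjMatrix : (normalizedAdjMatrix G).IsSymm := by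
  ext x y
  simp only [transpose_apply, normalizedAdjMatrix, of_apply, G.adj_comm y x, mul_comm]

theorem normalizedAdjMatrix_nonneg (x y : V) : 0 ≤ normalizedAdjMatrix G x y := by
  rw [normalizedAdjMatrix, of_apply]
  positivity

theorem adj_of_normalizedAdjMatrix_ne_zero {x y : V} (h : normalizedAdjMatrix G x y ≠ 0) :
    G.Adj x y := by
  contrapose! h
  simp [normalizedAdjMatrix, h]

theorem normalizedAdjMatrix_mulVec_sqrt_degree :
    normalizedAdjMatrix G *ᵥ (fun x ↦ √(G.degree x)) = fun x ↦ √(G.degree x) := by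
  ext x
  have term_eq y : normalizedAdjMatrix G x y * √(G.degree y) =
      if G.Adj x y then (√(G.degree x))⁻¹ else 0 := by
    rw [normalizedAdjMatrix, of_apply, ite_mul, zero_mul]
    refine ite_congr rfl (fun hxy ↦ ?_) fun _ ↦ rfl
    have hy : √(G.degree y) ≠ 0 := by
      have := hxy.symm.degree_pos_left
      positivity
    field_simp
  simp only [mulVec, dotProduct, term_eq, ← Finset.sum_filter, Finset.sum_const, nsmul_eq_mul]
  rw [← G.neighborFinset_eq_filter, card_neighborFinset_eq_degree, ← div_eq_mul_inv,
    Real.div_sqrt]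

theorem sum_normalizedAdjMatrix_sq_le {δ : ℝ} (hδ : 0 < δ)
    (hdeg : ∀ v, 0 < G.degree v → δ ≤ G.degree v) (y : V) :
    ∑ x, normalizedAdjMatrix G x y ^ 2 ≤ δ⁻¹ := by
  have term_le x : normalizedAdjMatrix G x y ^ 2 ≤
      if G.Adj y x then δ⁻¹ * (G.degree y : ℝ)⁻¹ else 0 := by
    rw [normalizedAdjMatrix, of_apply]
    simp only [G.adj_comm x y]
    split_ifs with hyx
    · rw [inv_pow, mul_pow, Real.sq_sqrt (by positivity), Real.sq_sqrt (by positivity), mul_inv]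
      gcongr
      exact hdeg x hyx.symm.degree_pos_left
    · simp
  calc ∑ x, normalizedAdjMatrix G x y ^ 2
      ≤ ∑ x, if G.Adj y x then δ⁻¹ * (G.degree y : ℝ)⁻¹ else 0 :=
        Finset.sum_le_sum fun x _ ↦ term_le x
    _ = δ⁻¹ * (G.degree y * (G.degree y : ℝ)⁻¹) := by
      rw [← Finset.sum_filter, Finset.sum_const, ← G.neighborFinset_eq_filter,
        card_neighborFinset_eq_degree, nsmul_eq_mul]
      ring
    _ ≤ δ⁻¹ := mul_le_of_le_one_right (by positivity) (mul_inv_le_one)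

theorem pow_le_card_mul_pow_of_blocksClosedWalks (hG : G ≠ ⊥) {δ : ℝ} (hδ : 0 < δ)
    (hdeg : ∀ v, 0 < G.degree v → δ ≤ G.degree v) {B : Sym2 V → Set (Sym2 V)} {f : ℕ}
    (hB : ∀ e y, {y' | s(y, y') ∈ B e}.ncard ≤ f) {k : ℕ} (hk : 0 < k)
    (hBG : ∀ n < 2 * k, BlocksClosedWalks B G.Adj n) :
    δ ^ k ≤ Fintype.card V * (16 * k ^ 4 * f) ^ (k - 1) := by
  classical
  obtain ⟨k, rfl⟩ := Nat.exists_eq_succ_of_ne_zero hk.ne'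
  set N := normalizedAdjMatrix G
  have hBN n (hn : n < 2 * (k + 1)) : BlocksClosedWalks B (N · · ≠ 0) n := fun w hw ↦
    hBG n hn w fun i ↦ adj_of_normalizedAdjMatrix_ne_zero (hw i)
  have sqrt_degree_ne_zero : (fun x ↦ √(G.degree x)) ≠ 0 := by
    obtain ⟨x, y, hxy⟩ := ne_bot_iff_exists_adj.mp hG
    have := hxy.degree_pos_left
    exact Function.ne_iff.mpr ⟨x, by simp only [Pi.zero_apply]; positivity⟩
  have pow_mulVec m : N ^ m *ᵥ (fun x ↦ √(G.degree x)) = fun x ↦ √(G.degree x) := by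
    induction m with
    | zero => simp
    | succ m ih => rw [pow_succ, ← mulVec_mulVec, normalizedAdjMatrix_mulVec_sqrt_degree, ih]
  have one_le : 1 ≤ Fintype.card V * δ⁻¹ * (16 * (k + 1 : ℕ) ^ 4 * f * δ⁻¹) ^ k := by
    calc (1 : ℝ) ≤ (N ^ (2 * (k + 1))).trace := by
          rw [trace_pow_two_mul isSymm_normalizedAdjMatrix]
          exact one_le_sum_sq_of_mulVec_eq_self sqrt_degree_ne_zero (pow_mulVec _)
      _ ≤ _ := trace_pow_le_of_blocksClosedWalks isSymm_normalizedAdjMatrix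
        normalizedAdjMatrix_nonneg (inv_nonneg.mpr hδ.le)
        (sum_normalizedAdjMatrix_sq_le hδ hdeg) hB hBN k.lt_succ_self
  calc δ ^ (k + 1) = δ ^ (k + 1) * 1 := (mul_one _).symm
    _ ≤ δ ^ (k + 1) * (Fintype.card V * δ⁻¹ * (16 * (k + 1 : ℕ) ^ 4 * f * δ⁻¹) ^ k) := by gcongr
    _ = Fintype.card V * (16 * (k + 1 : ℕ) ^ 4 * f) ^ k := by
      rw [mul_pow _ δ⁻¹, inv_pow]
      field_simp
      ring

end NormalizedAdjacency

section DenseSubgraph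

variable {V : Type*} [Fintype V] {G : SimpleGraph V}

open scoped Classical in
theorem exists_le_forall_le_degree (hG : G ≠ ⊥) {δ : ℝ}
    (hδ : δ * G.support.ncard ≤ G.edgeSet.ncard) :
    ∃ H ≤ G, H ≠ ⊥ ∧ ∀ v, 0 < H.degree v → δ ≤ H.degree v := by
  let dense (H : SimpleGraph V) : Prop := H ≠ ⊥ ∧ δ * H.support.ncard ≤ H.edgeSet.ncard
  obtain ⟨H, hHG, ⟨hH, hHδ⟩, hmin⟩ := exists_minimal_le_of_wellFoundedLT dense G ⟨hG, hδ⟩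
  refine ⟨H, hHG, hH, fun v hv ↦ le_of_not_gt fun hlt ↦ ?_⟩
  have hv_mem : v ∈ H.support := H.degree_pos_iff_mem_support v |>.mp hv
  have card_edgeSet : ((H.deleteIncidenceSet v).edgeSet.ncard : ℝ) =
      H.edgeSet.ncard - H.degree v := by
    rw [edgeSet_deleteIncidenceSet, Set.cast_ncard_sdiff (H.incidenceSet_subset v) (Set.toFinite _),
      ← Nat.card_coe_set_eq (H.incidenceSet v), Nat.card_eq_fintype_card,
      card_incidenceSet_eq_degree]
  have card_support : ((H.deleteIncidenceSet v).support.ncard : ℝ) ≤ H.support.ncard - 1 := by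
    rw [le_sub_iff_add_le, ← Nat.cast_one (R := ℝ), ← Nat.cast_add, Nat.cast_le,
      ← Set.ncard_sdiff_singleton_add_one hv_mem (Set.toFinite _)]
    gcongr
    exacts [Set.toFinite _, H.support_deleteIncidenceSet_subset v]
  have hlt_card : δ * (H.deleteIncidenceSet v).support.ncard <
      (H.deleteIncidenceSet v).edgeSet.ncard := by
    have := mul_le_mul_of_nonneg_left card_support ((Nat.cast_nonneg _).trans hlt.le)
    linarith
  have hne : H.deleteIncidenceSet v ≠ ⊥ := by
    intro h
    simp [h] at hlt_card
  have := hmin ⟨hne, hlt_card.le⟩ (H.deleteIncidenceSet_le v)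
  obtain ⟨u, hvu⟩ := hv_mem
  exact (deleteIncidenceSet_adj.mp (this hvu)).2.1 rfl

theorem le_rpow_mul_rpow_of_pow_le {x y a : ℝ} (hx : 0 ≤ x) (hy : 0 ≤ y) (ha : 0 ≤ a) {k : ℕ}
    (hk : 0 < k) (h : x ^ k ≤ y * a ^ (k - 1)) :
    x ≤ y ^ (1 / (k : ℝ)) * a ^ (1 - 1 / (k : ℝ)) := by
  have hk' : (k : ℝ) ≠ 0 := by positivity
  calc x = (x ^ k) ^ (1 / (k : ℝ)) := by rw [one_div, Real.pow_rpow_inv_natCast hx hk.ne']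
    _ ≤ (y * a ^ (k - 1)) ^ (1 / (k : ℝ)) := by gcongr
    _ = y ^ (1 / (k : ℝ)) * a ^ (1 - 1 / (k : ℝ)) := by
      rw [Real.mul_rpow hy (by positivity), ← Real.rpow_natCast_mul ha, Nat.cast_pred hk]
      congr 2
      field_simp

theorem ncard_edgeSet_le_of_blocksClosedWalks {B : Sym2 V → Set (Sym2 V)} {f : ℕ}
    (hB : ∀ e y, {y' | s(y, y') ∈ B e}.ncard ≤ f) {k : ℕ} (hk : 0 < k)
    (hBG : ∀ n < 2 * k, BlocksClosedWalks B G.Adj n) :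
    (G.edgeSet.ncard : ℝ) ≤ (Fintype.card V : ℝ) ^ (1 + 1 / (k : ℝ)) *
      (16 * k ^ 4 * f : ℝ) ^ (1 - 1 / (k : ℝ)) := by
  classical
  rcases eq_or_ne G ⊥ with rfl | hG
  · simp only [edgeSet_bot, Set.ncard_empty, Nat.cast_zero]
    positivity
  have hcard : 0 < Fintype.card V := by
    obtain ⟨v, -⟩ := ne_bot_iff_exists_adj.mp hG
    exact Fintype.card_pos_iff.mpr ⟨v⟩
  have hE : 0 < G.edgeSet.ncard :=
    Set.ncard_pos (Set.toFinite _) |>.mpr (edgeSet_nonempty.mpr hG)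
  set δ : ℝ := G.edgeSet.ncard / Fintype.card V
  have hδ : 0 < δ := by positivity
  have support_le : δ * G.support.ncard ≤ G.edgeSet.ncard := by
    calc δ * G.support.ncard ≤ δ * Fintype.card V := by
          gcongr
          rw [← Nat.card_eq_fintype_card]
          exact Set.ncard_le_card _
      _ = G.edgeSet.ncard := div_mul_cancel₀ _ (by positivity)
  obtain ⟨H, hHG, hH, hdeg⟩ := exists_le_forall_le_degree hG support_le
  have pow_le := pow_le_card_mul_pow_of_blocksClosedWalks hH hδ hdeg hB hk
    fun n hn w hw ↦ hBG n hn w fun i ↦ hHG (hw i)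
  calc (G.edgeSet.ncard : ℝ) = Fintype.card V * δ := (mul_div_cancel₀ _ (by positivity)).symm
    _ ≤ Fintype.card V * ((Fintype.card V : ℝ) ^ (1 / (k : ℝ)) *
        (16 * k ^ 4 * f : ℝ) ^ (1 - 1 / (k : ℝ))) := by
      gcongr
      exact le_rpow_mul_rpow_of_pow_le hδ.le (by positivity) (by positivity) hk pow_le
    _ = _ := by rw [Real.rpow_one_add' (by positivity) (by positivity)]; ring

end DenseSubgraph

section Greedy

variable {V α : Type*} {G H : SimpleGraph V} {w : Sym2 V → α} {𝓕 : Set (Set (Sym2 V))}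
  {B : Sym2 V → Set (Sym2 V)} {t : ℕ} {u v : V}

/-- `H` is a spanner of `G` with hop bound `t` that tolerates the fault sets in `𝓕`, in the
bottleneck sense: the ends of every surviving edge of `G` are joined by a surviving walk in `H` of
at most `t` edges, none of them heavier than the given edge. -/
def IsBottleneckSpanner [LE α] (G H : SimpleGraph V) (w : Sym2 V → α)
    (𝓕 : Set (Set (Sym2 V))) (t : ℕ) : Prop :=
  ∀ F ∈ 𝓕, ∀ u v, (G.deleteEdges F).Adj u v →
    ∃ p : (H.deleteEdges F).Walk u v, p.length ≤ t ∧ ∀ e ∈ p.edges, w e ≤ w s(u, v)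

/-- Every nonempty subgraph `C` of `H` has an edge `e` whose ends are at hop distance more than `t`
in `C` once `e` and the edges in `B e` are deleted. This records the witnesses of the greedy
algorithm: `e` is the last edge of `C` to be added, and `B e` the fault set that forced its
addition. -/
def SeparatesSubgraphs (H : SimpleGraph V) (B : Sym2 V → Set (Sym2 V)) (t : ℕ) : Prop :=
  ∀ C ≤ H, C ≠ ⊥ →
    ∃ u v, C.Adj u v ∧ t < (C.deleteEdges (insert s(u, v) (B s(u, v)))).edist u v

theorem sym2_eq_of_adj_edge {x y : V} (h : (edge u v).Adj x y) : s(x, y) = s(u, v) :=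
  ((fromEdgeSet_adj _).mp h).1

theorem IsBottleneckSpanner.sup_edge [Preorder α] (ht : 0 < t)
    (h : IsBottleneckSpanner G H w 𝓕 t) (u v : V) :
    IsBottleneckSpanner (G ⊔ edge u v) (H ⊔ edge u v) w 𝓕 t := by
  intro F hF x y hxy
  obtain ⟨hG | he, hxyF⟩ := deleteEdges_adj.mp hxy
  · obtain ⟨p, hp, hpw⟩ := h F hF x y (deleteEdges_adj.mpr ⟨hG, hxyF⟩)
    have hle : H.deleteEdges F ≤ (H ⊔ edge u v).deleteEdges F := deleteEdges_mono le_sup_left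
    exact ⟨p.mapLe hle, by simpa using hp, by simpa using hpw⟩
  · have hadj : ((H ⊔ edge u v).deleteEdges F).Adj x y := deleteEdges_adj.mpr ⟨.inr he, hxyF⟩
    exact ⟨hadj.toWalk, by simpa using Nat.one_le_iff_ne_zero.mpr ht.ne', by simp⟩

theorem IsBottleneckSpanner.sup_edge_left [Preorder α] (h : IsBottleneckSpanner G H w 𝓕 t)
    (hdist : ∀ F ∈ 𝓕, (H.deleteEdges F).edist u v ≤ t) (hw : ∀ e ∈ H.edgeSet, w e ≤ w s(u, v)) :
    IsBottleneckSpanner (G ⊔ edge u v) H w 𝓕 t := by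
  intro F hF x y hxy
  obtain ⟨hG | he, hxyF⟩ := deleteEdges_adj.mp hxy
  · exact h F hF x y (deleteEdges_adj.mpr ⟨hG, hxyF⟩)
  · have hxy_eq : s(x, y) = s(u, v) := sym2_eq_of_adj_edge he
    have hdist_xy : (H.deleteEdges F).edist x y ≤ t := by
      rcases Sym2.eq_iff.mp hxy_eq with ⟨rfl, rfl⟩ | ⟨rfl, rfl⟩
      · exact hdist F hF
      · exact edist_comm.trans_le (hdist F hF)
    obtain ⟨p, hp⟩ := exists_walk_of_edist_ne_top
      (ne_top_of_le_ne_top (ENat.natCast_ne_top t) hdist_xy)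
    refine ⟨p, by exact_mod_cast hp.trans_le hdist_xy, fun e hep ↦ ?_⟩
    rw [hxy_eq]
    exact hw e (edgeSet_mono (deleteEdges_le F) (p.edges_subset_edgeSet hep))

open scoped Classical in
theorem SeparatesSubgraphs.sup_edge (h : SeparatesSubgraphs H B t) {F : Set (Sym2 V)}
    (huv : t < (H.deleteEdges F).edist u v) :
    SeparatesSubgraphs (H ⊔ edge u v) (Function.update B s(u, v) F) t := by
  intro C hC hC₀
  by_cases hCuv : C.Adj u v
  · refine ⟨u, v, hCuv, huv.trans_le (edist_anti fun x y hxy ↦ ?_)⟩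
    simp only [Function.update_self, deleteEdges_adj, Set.mem_insert_iff, not_or] at hxy
    obtain ⟨hCxy, hne, hxyF⟩ := hxy
    rcases hC hCxy with hH | he
    · exact deleteEdges_adj.mpr ⟨hH, hxyF⟩
    · exact absurd (sym2_eq_of_adj_edge he) hne
  · have ne_of_adj {x y} (hxy : C.Adj x y) : s(x, y) ≠ s(u, v) := fun he ↦
      hCuv (by rwa [← mem_edgeSet, ← he])
    have hCH : C ≤ H := fun x y hxy ↦
      (hC hxy).resolve_right fun he ↦ ne_of_adj hxy (sym2_eq_of_adj_edge he)
    obtain ⟨x, y, hxy, hdist⟩ := h C hCH hC₀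
    exact ⟨x, y, hxy, by rwa [Function.update_of_ne (ne_of_adj hxy)]⟩

theorem exists_isBottleneckSpanner [Finite V] [LinearOrder α] (G : SimpleGraph V) (w : Sym2 V → α)
    (h𝓕 : 𝓕.Nonempty) (ht : 0 < t) :
    ∃ H ≤ G, ∃ B : Sym2 V → Set (Sym2 V), (∀ e, B e ∈ 𝓕) ∧
      IsBottleneckSpanner G H w 𝓕 t ∧ SeparatesSubgraphs H B t := by
  classical
  have := Fintype.ofFinite V
  suffices ∀ S : Finset (Sym2 V), ∃ H ≤ fromEdgeSet S, ∃ B : Sym2 V → Set (Sym2 V),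
      (∀ e, B e ∈ 𝓕) ∧ IsBottleneckSpanner (fromEdgeSet S) H w 𝓕 t ∧ SeparatesSubgraphs H B t by
    simpa using this G.edgeFinset
  intro S
  induction S using Finset.induction_on_max_value w with
  | empty =>
    obtain ⟨F, hF⟩ := h𝓕
    exact ⟨⊥, bot_le, fun _ ↦ F, fun _ ↦ hF, by simp [IsBottleneckSpanner],
      fun C hC hC₀ ↦ absurd (le_bot_iff.mp hC) hC₀⟩
  | insert e S _ hmax ih =>
    obtain ⟨H, hHS, B, hB𝓕, hH, hBH⟩ := ih
    induction e with | _ u v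
    have insert_eq : fromEdgeSet (insert s(u, v) S : Finset (Sym2 V)) =
        fromEdgeSet S ⊔ edge u v := by
      rw [Finset.coe_insert, Set.insert_eq, Set.union_comm, edge, fromEdgeSet_union]
    rw [insert_eq]
    by_cases hF : ∃ F ∈ 𝓕, t < (H.deleteEdges F).edist u v
    · obtain ⟨F, hF𝓕, hF⟩ := hF
      refine ⟨H ⊔ edge u v, sup_le_sup_right hHS _, Function.update B s(u, v) F, fun e ↦ ?_,
        hH.sup_edge ht u v, hBH.sup_edge hF⟩
      rw [Function.update_apply]
      split_ifs
      exacts [hF𝓕, hB𝓕 e]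
    · push Not at hF
      refine ⟨H, le_sup_of_le_left hHS, B, hB𝓕, hH.sup_edge_left hF fun e he ↦ hmax e ?_, hBH⟩
      exact (edgeSet_fromEdgeSet (S : Set (Sym2 V)) ▸ edgeSet_mono hHS he).1

theorem edist_le_of_forall_adj {p : ℕ → V} {n : ℕ} (hp : ∀ l < n, G.Adj (p l) (p (l + 1))) :
    G.edist (p 0) (p n) ≤ n := by
  induction n with
  | zero => simp
  | succ n ih =>
    calc G.edist (p 0) (p (n + 1)) ≤ G.edist (p 0) (p n) + G.edist (p n) (p (n + 1)) :=
          G.edist_triangle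
      _ ≤ n + 1 := by
        gcongr
        · exact ih fun l hl ↦ hp l (by omega)
        · exact (edist_eq_one_iff_adj.mpr (hp n n.lt_succ_self)).le
      _ = (n + 1 : ℕ) := by push_cast; rfl

open scoped Fin.CommRing in
theorem SeparatesSubgraphs.blocksClosedWalks (h : SeparatesSubgraphs H B t) {n : ℕ} (hn : n ≤ t) :
    BlocksClosedWalks (fun e ↦ insert e (B e)) H.Adj n := by
  intro w hw
  let C : SimpleGraph V := fromEdgeSet (Set.range fun i ↦ s(w i, w (i + 1)))
  have adj_C i : C.Adj (w i) (w (i + 1)) := (fromEdgeSet_adj _).mpr ⟨⟨i, rfl⟩, (hw i).ne⟩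
  have hCH : C ≤ H := by
    rw [← edgeSet_subset_edgeSet, edgeSet_fromEdgeSet]
    rintro _ ⟨⟨i, rfl⟩, -⟩
    exact hw i
  obtain ⟨u, v, huv, hdist⟩ := h C hCH (ne_bot_iff_exists_adj.mpr ⟨_, _, adj_C 0⟩)
  obtain ⟨i, hi⟩ : s(u, v) ∈ Set.range fun i ↦ s(w i, w (i + 1)) := ((fromEdgeSet_adj _).mp huv).1
  by_contra! hblock
  refine hdist.not_ge ?_
  have detour : (C.deleteEdges (insert s(u, v) (B s(u, v)))).edist (w (i + 1)) (w i) ≤ n := by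
    have chain := edist_le_of_forall_adj (n := n) (p := fun l : ℕ ↦ w (i + 1 + l))
      (G := C.deleteEdges (insert s(u, v) (B s(u, v)))) fun l hl ↦ by
        have hne : i ≠ i + 1 + l := fun h ↦ by
          have hl₀ : ((l + 1 : ℕ) : Fin (n + 1)) = 0 := by
            simpa [add_assoc, add_comm (1 : Fin (n + 1))] using h
          exact absurd (Nat.le_of_dvd l.succ_pos (Fin.natCast_eq_zero.mp hl₀)) (by omega)
        rw [Nat.cast_succ, ← add_assoc, deleteEdges_adj, ← hi]
        exact ⟨adj_C _, hblock i _ hne⟩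
    have last_eq : i + 1 + (n : Fin (n + 1)) = i := by
      rw [add_assoc, add_comm 1, ← Nat.cast_succ, Fin.natCast_self, add_zero]
    simpa only [last_eq, Nat.cast_zero, add_zero] using chain
  refine le_trans ?_ (detour.trans (mod_cast hn))
  rcases Sym2.eq_iff.mp hi with ⟨rfl, rfl⟩ | ⟨rfl, rfl⟩
  · exact edist_comm.le
  · exact le_rfl

end Greedy

section WeightedDistance

variable {V : Type} {G H : SimpleGraph V} {w : Sym2 V → ℝ} {u v : V}

theorem wdist_self (G : SimpleGraph V) (w : Sym2 V → ℝ) (u : V) : wdist G w u u = 0 :=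
  le_antisymm ((iInf_le _ Walk.nil).trans (by simp)) zero_le

theorem wdist_triangle (G : SimpleGraph V) (w : Sym2 V → ℝ) (x y z : V) :
    wdist G w x z ≤ wdist G w x y + wdist G w y z :=
  ENNReal.le_iInf_add_iInf fun p q ↦ (iInf_le _ (p.append q)).trans (by simp)

theorem wdist_le_length_mul (p : G.Walk u v) {r : ℝ} (hp : ∀ e ∈ p.edges, w e ≤ r) :
    wdist G w u v ≤ p.length * ENNReal.ofReal r := by
  calc wdist G w u v ≤ (p.edges.map fun e ↦ ENNReal.ofReal (w e)).sum := iInf_le _ p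
    _ ≤ (p.edges.map fun e ↦ ENNReal.ofReal (w e)).length • ENNReal.ofReal r := by
      refine List.sum_le_card_nsmul _ _ fun _ h ↦ ?_
      obtain ⟨e, he, rfl⟩ := List.mem_map.mp h
      exact ENNReal.ofReal_le_ofReal (hp e he)
    _ = p.length * ENNReal.ofReal r := by simp

theorem wdist_le_mul_wdist_of_forall_adj {c : ℝ≥0∞} (hc₀ : c ≠ 0) (hc : c ≠ ∞)
    (h : ∀ u v, G.Adj u v → wdist H w u v ≤ c * ENNReal.ofReal (w s(u, v))) (u v : V) :
    wdist H w u v ≤ c * wdist G w u v := by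
  simp only [wdist.eq_def G, ENNReal.mul_iInf_of_ne hc₀ hc]
  refine le_iInf fun p ↦ ?_
  induction p with
  | nil => simp [wdist_self]
  | @cons x y z hxy p ih =>
    rw [Walk.edges_cons, List.map_cons, List.sum_cons, mul_add]
    exact (wdist_triangle H w x y z).trans (add_le_add (h _ _ hxy) ih)

theorem IsBottleneckSpanner.wdist_le {𝓕 : Set (Set (Sym2 V))} {t : ℕ} (ht : t ≠ 0)
    (h : IsBottleneckSpanner G H w 𝓕 t) {F : Set (Sym2 V)} (hF : F ∈ 𝓕) (u v : V) :
    wdist (H.deleteEdges F) w u v ≤ t * wdist (G.deleteEdges F) w u v := by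
  refine wdist_le_mul_wdist_of_forall_adj (by simpa) (by simp) (fun x y hxy ↦ ?_) u v
  obtain ⟨p, hpt, hpw⟩ := h F hF x y hxy
  exact (wdist_le_length_mul p hpw).trans (by gcongr)

end WeightedDistance

theorem DegLE.ncard_insert_le {V : Type} [Finite V] {F : Set (Sym2 V)} {f : ℕ} (hF : DegLE F f)
    (e : Sym2 V) (y : V) : {y' | s(y, y') ∈ insert e F}.ncard ≤ f + 1 := by
  calc {y' | s(y, y') ∈ insert e F}.ncard ≤ (insert e {e' ∈ F | y ∈ e'}).ncard :=
        Set.ncard_le_ncard_of_injOn (fun y' ↦ s(y, y'))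
          (fun y' hy' ↦ hy'.imp_right fun h ↦ ⟨h, Sym2.mem_mk_left y y'⟩)
          (fun _ _ _ _ ↦ Sym2.congr_right.mp) (Set.toFinite _)
    _ ≤ f + 1 := (Set.ncard_insert_le _ _).trans (Nat.add_le_add_right (hF y) 1)

theorem thirtyTwo_mul_pow_four_le {k : ℕ} (hk : 0 < k) : 32 * (k : ℝ) ^ 4 ≤ (512 * k) ^ k := by
  calc 32 * (k : ℝ) ^ 4 ≤ 32 ^ k * (2 ^ k) ^ 4 := by
        gcongr
        · exact le_self_pow₀ (by norm_num) hk.ne'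
        · exact_mod_cast Nat.lt_two_pow_self.le
    _ = 512 ^ k := by rw [← pow_mul, mul_comm k, pow_mul, ← mul_pow]; norm_num
    _ ≤ (512 * k) ^ k := by
      gcongr
      exact le_mul_of_one_le_right (by norm_num) (mod_cast hk)

theorem mul_add_one_rpow_le {c x a : ℝ} (hc : 1 ≤ c) (hx : 1 ≤ x) (ha₀ : 0 ≤ a) (ha₁ : a ≤ 1) :
    (c * (x + 1)) ^ a ≤ 2 * c * x ^ a := by
  calc (c * (x + 1)) ^ a ≤ (2 * c * x) ^ a := by
        gcongr ?_ ^ _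
        nlinarith
    _ = (2 * c) ^ a * x ^ a := Real.mul_rpow (by positivity) (by positivity)
    _ ≤ 2 * c * x ^ a := by
      gcongr
      exact Real.rpow_le_self_of_one_le (by linarith) ha₁

theorem fd_greedy_spanner_exists_general {V : Type} [Fintype V] (G : SimpleGraph V)
    (w : Sym2 V → ℝ) (_hw : ∀ e ∈ G.edgeSet, 0 ≤ w e) {k f : ℕ} (hk : 0 < k) (hf : 0 < f) :
    ∃ H ≤ G,
      (H.edgeSet.ncard : ℝ) ≤ (f : ℝ) ^ (1 - 1 / (k : ℝ)) *
        (Fintype.card V : ℝ) ^ (1 + 1 / (k : ℝ)) * (32 * k ^ 4) ∧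
      ∀ F, DegLE F f → ∀ u v, wdist (H.deleteEdges F) w u v ≤
        ((2 * k - 1 : ℕ) : ℝ≥0∞) * wdist (G.deleteEdges F) w u v := by
  have hk₁ : (1 : ℝ) ≤ k := mod_cast hk
  obtain ⟨H, hHG, B, hB, hspanner, hsep⟩ := exists_isBottleneckSpanner (𝓕 := {F | DegLE F f})
    (t := 2 * k - 1) G w ⟨∅, by simp [DegLE]⟩ (by omega)
  refine ⟨H, hHG, ?_, fun F hF ↦ hspanner.wdist_le (by omega) hF⟩
  calc (H.edgeSet.ncard : ℝ)
      ≤ (Fintype.card V : ℝ) ^ (1 + 1 / (k : ℝ)) *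
          (16 * k ^ 4 * (f + 1 : ℕ) : ℝ) ^ (1 - 1 / (k : ℝ)) :=
        ncard_edgeSet_le_of_blocksClosedWalks (fun e ↦ (hB e).ncard_insert_le e) hk
          fun n hn ↦ hsep.blocksClosedWalks (by omega)
    _ ≤ (Fintype.card V : ℝ) ^ (1 + 1 / (k : ℝ)) *
          (2 * (16 * k ^ 4) * (f : ℝ) ^ (1 - 1 / (k : ℝ))) := by
      gcongr
      push_cast
      exact mul_add_one_rpow_le (by nlinarith [one_le_pow₀ hk₁ (n := 4)]) (mod_cast hf)
        (sub_nonneg.mpr (div_le_one_of_le₀ hk₁ (by positivity)))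
        (sub_le_self _ (by positivity))
    _ = _ := by ring

/-- There is an absolute constant `A > 0` such that every `n`-vertex graph
with positive edge weights admits an `f`-FD `(2k−1)`-spanner with at most
`f^{1−1/k} · n^{1+1/k} · (A·k)^k` edges. -/
theorem fd_greedy_spanner_exists :
    ∃ A : ℝ, 0 < A ∧
      ∀ (n k f : ℕ), 0 < n → 0 < k → 0 < f →
        ∀ (V : Type) [Fintype V], Fintype.card V = n →
          ∀ (G : SimpleGraph V) (w : Sym2 V → ℝ), (∀ e ∈ G.edgeSet, 0 < w e) →
            ∃ H : SimpleGraph V, H ≤ G ∧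
              (H.edgeSet.ncard : ℝ) ≤
                (f : ℝ) ^ (1 - 1 / (k : ℝ)) * (n : ℝ) ^ (1 + 1 / (k : ℝ)) * (A * k) ^ k ∧
              ∀ F : Set (Sym2 V), F ⊆ G.edgeSet → DegLE F f →
                ∀ u v : V,
                  wdist (H.deleteEdges F) w u v ≤
                    ((2 * k - 1 : ℕ) : ℝ≥0∞) * wdist (G.deleteEdges F) w u v := by
  refine ⟨512, by norm_num, fun n k f _ hk hf V _ hn G w hw ↦ ?_⟩
  obtain ⟨H, hHG, hcard, hdist⟩ :=
    fd_greedy_spanner_exists_general G w (fun e he ↦ (hw e he).le) hk hf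
  refine ⟨H, hHG, hcard.trans ?_, fun F _ ↦ hdist F⟩
  rw [hn]
  gcongr
  exact thirtyTwo_mul_pow_four_le hk
end

section
/- There exists an absolute constant A > 0 such that for all positive integers n, k, f, any n-vertex graph H equipped with a strict linear order on its edges that admits an f-FD 2k-blocking set satisfies |E(H)| ≤ f^{1−1/k} · n^{1+1/k} · (A·k)^k. -/
open SimpleGraph

/-- `lt` is a strict linear order on the edges of `H`. -/
def IsEdgeOrder {V : Type} (H : SimpleGraph V) (lt : Sym2 V → Sym2 V → Prop) : Prop :=
  (∀ e ∈ H.edgeSet, ¬ lt e e) ∧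
  (∀ e₁ ∈ H.edgeSet, ∀ e₂ ∈ H.edgeSet, ∀ e₃ ∈ H.edgeSet, lt e₁ e₂ → lt e₂ e₃ → lt e₁ e₃) ∧
  (∀ e₁ ∈ H.edgeSet, ∀ e₂ ∈ H.edgeSet, e₁ ≠ e₂ → lt e₁ e₂ ∨ lt e₂ e₁)

/-- `Fb` is an `f`-FD `k`-blocking set for `H` with respect to the edge order `lt`:
each edge `e` gets a set `Fb e` of earlier edges of `H` with faulty-degree at most `f`,
and every cycle with at most `k` edges is "blocked" at its latest edge. -/
def IsFDBlockingSet {V : Type} (H : SimpleGraph V) (lt : Sym2 V → Sym2 V → Prop)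
    (f k : ℕ) (Fb : Sym2 V → Set (Sym2 V)) : Prop :=
  (∀ e ∈ H.edgeSet, Fb e ⊆ H.edgeSet) ∧
  (∀ e ∈ H.edgeSet, ∀ v : V, {e' ∈ Fb e | v ∈ e'}.ncard ≤ f) ∧
  (∀ e ∈ H.edgeSet, ∀ e' ∈ Fb e, lt e' e) ∧
  (∀ (v : V) (p : H.Walk v v), p.IsCycle → p.length ≤ k →
    ∀ e ∈ p.edges, (∀ e' ∈ p.edges, e' ≠ e → lt e' e) →
      ∃ e' ∈ Fb e, e' ∈ p.edges)

/-!
Peel off the first `d` remaining edges at every vertex, and repeat this `k` times. If an edge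
survives, then one of its ends starts `d ^ k` walks of length `k` along which the edge labels
decrease. If two of these walks have the same end but different first edges, they form a detour of
earlier edges around the later of the two first edges `e`; so unless the walk through `e` meets
`F e` after its first step, the other walk does. Since `F e` contains at most `f` edges at each
vertex, only a fraction `k * f / d` of the walks meet it. Hence few walks are blocked by their own
first edge, and few pairs of unblocked walks share an end, so a second moment argument shows that
few walks end at an overfull vertex. Discarding these step by step keeps half of the `d ^ k` walks
while at most `C ^ (k - 1)` of them, with `C = 12 * k ^ 2 * f`, share an end; the exponent is
`k - 1` because a walk of length one is determined by its ends. So `d ^ k ≤ 2 * n * C ^ (k - 1)`,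
which fails for `d` of order `k ^ 2 * f ^ (1 - 1 / k) * n ^ (1 / k)`. The error terms are small
because this exceeds `4 * k ^ 2 * f` when `f ≤ n`; when `n ≤ f`, the bound `n ^ 2` is enough.
-/

namespace FDBlocking

open Finset

theorem exists_initialSegment {α L : Type*} [LinearOrder L] {g : α → L}
    (hg : Function.Injective g) (A : Finset α) (d : ℕ) :
    ∃ S ⊆ A, #S ≤ d ∧ ∀ y ∈ A, y ∉ S → #S = d ∧ ∀ z ∈ S, g z < g y := by
  classical
  induction d with
  | zero => exact ⟨∅, by simp⟩
  | succ d ih =>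
    obtain ⟨S, hSA, hcard, hS⟩ := ih
    obtain hrest | hrest := (A \ S).eq_empty_or_nonempty
    · exact ⟨S, hSA, by omega, fun y hy hyS ↦ absurd (sdiff_eq_empty_iff_subset.1 hrest hy) hyS⟩
    · obtain ⟨m, hm, hmin⟩ := exists_min_image (A \ S) g hrest
      obtain ⟨hmA, hmS⟩ := mem_sdiff.1 hm
      have hcard' : #(insert m S) = d + 1 := by
        rw [card_insert_of_notMem hmS, (hS m hmA hmS).1]
      refine ⟨insert m S, insert_subset hmA hSA, hcard'.le, fun y hy hyS ↦ ⟨hcard', ?_⟩⟩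
      rw [mem_insert, not_or] at hyS
      refine forall_mem_insert _ _ _ |>.2 ⟨?_, (hS y hy hyS.2).2⟩
      exact (hmin y (mem_sdiff.2 ⟨hy, hyS.2⟩)).lt_of_ne (hg.ne (Ne.symm hyS.1))

/-- Pairs `y, x` with `g y < g x` contribute at most `c * h x` to the square of the sum, and
pairs `x, x` at most `c * a x`. -/
theorem sq_sum_le {ι L : Type*} [LinearOrder L] {g : ι → L} (hg : Function.Injective g)
    {a h : ι → ℕ} {c : ℕ} (S : Finset ι) (ha : ∀ x ∈ S, a x ≤ c)
    (hh : ∀ x ∈ S, a x ≠ 0 → ∑ y ∈ S with g y < g x, a y ≤ h x) :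
    (∑ x ∈ S, a x) ^ 2 ≤ c * (∑ x ∈ S, a x + 2 * ∑ x ∈ S, h x) := by
  classical
  induction S using Finset.induction_on_max_value g with
  | empty => simp
  | insert m T hm hmax ih =>
    have hprev : (∑ x ∈ T, a x) ^ 2 ≤ c * (∑ x ∈ T, a x + 2 * ∑ x ∈ T, h x) :=
      ih (fun x hx ↦ ha x (mem_insert_of_mem hx)) fun x hx hax ↦
        (sum_le_sum_of_subset (filter_subset_filter _ (subset_insert m T))).trans
          (hh x (mem_insert_of_mem hx) hax)
    have hcross : a m * ∑ x ∈ T, a x ≤ c * h m := by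
      obtain hzero | hpos := eq_or_ne (a m) 0
      · simp [hzero]
      · refine Nat.mul_le_mul (ha m (mem_insert_self m T)) ?_
        refine (sum_le_sum_of_subset fun x hx ↦ ?_).trans (hh m (mem_insert_self m T) hpos)
        have hxm : x ≠ m := fun hxm ↦ hm (hxm ▸ hx)
        exact mem_filter.2 ⟨mem_insert_of_mem hx, (hmax x hx).lt_of_ne (hg.ne hxm)⟩
    have hdiag : a m * a m ≤ c * a m := Nat.mul_le_mul_right _ (ha m (mem_insert_self m T))
    rw [sum_insert hm, sum_insert hm]
    nlinarith

section EdgeOrder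

variable {V : Type} {H : SimpleGraph V} {lt : Sym2 V → Sym2 V → Prop}

theorem exists_edgeLabelling [Finite V] (horder : IsEdgeOrder H lt) :
    ∃ ρ : Sym2 V → ℕ, Set.InjOn ρ H.edgeSet ∧
      ∀ e₁ ∈ H.edgeSet, ∀ e₂ ∈ H.edgeSet, (ρ e₁ < ρ e₂ ↔ lt e₁ e₂) := by
  obtain ⟨hirrefl, htrans, htotal⟩ := horder
  let ρ : Sym2 V → ℕ := fun e ↦ {e' ∈ H.edgeSet | lt e' e}.ncard
  have hmono : ∀ e₁ ∈ H.edgeSet, ∀ e₂ ∈ H.edgeSet, lt e₁ e₂ → ρ e₁ < ρ e₂ := by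
    intro e₁ h₁ e₂ h₂ h₁₂
    refine Set.ncard_lt_ncard (Set.ssubset_iff_of_subset ?_ |>.2 ?_) (Set.toFinite _)
    · exact fun e he ↦ ⟨he.1, htrans e he.1 e₁ h₁ e₂ h₂ he.2 h₁₂⟩
    · exact ⟨e₁, ⟨h₁, h₁₂⟩, fun he ↦ hirrefl e₁ h₁ he.2⟩
  have hinj : Set.InjOn ρ H.edgeSet := by
    intro e₁ h₁ e₂ h₂ heq
    by_contra hne
    obtain hlt | hlt := htotal e₁ h₁ e₂ h₂ hne
    · exact (hmono e₁ h₁ e₂ h₂ hlt).ne heq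
    · exact (hmono e₂ h₂ e₁ h₁ hlt).ne' heq
  refine ⟨ρ, hinj, fun e₁ h₁ e₂ h₂ ↦ ⟨fun hlt ↦ ?_, hmono e₁ h₁ e₂ h₂⟩⟩
  refine (htotal e₁ h₁ e₂ h₂ fun heq ↦ hlt.ne (congrArg ρ heq)).resolve_right fun hgt ↦ ?_
  exact hlt.not_gt (hmono e₂ h₂ e₁ h₁ hgt)

theorem isFDBlockingSet_congr {lt' : Sym2 V → Sym2 V → Prop} {f r : ℕ}
    {F : Sym2 V → Set (Sym2 V)}
    (hlt : ∀ e₁ ∈ H.edgeSet, ∀ e₂ ∈ H.edgeSet, (lt' e₁ e₂ ↔ lt e₁ e₂))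
    (hF : IsFDBlockingSet H lt f r F) : IsFDBlockingSet H lt' f r F := by
  obtain ⟨hsub, hdeg, hearlier, hcycle⟩ := hF
  refine ⟨hsub, hdeg, fun e he e' he' ↦ (hlt e' (hsub e he he') e he).2 (hearlier e he e' he'),
    fun v p hp hlen e he hlast ↦ hcycle v p hp hlen e he fun e' he' hne ↦ ?_⟩
  exact (hlt e' (p.edges_subset_edgeSet he') e (p.edges_subset_edgeSet he)).1 (hlast e' he' hne)

theorem exists_mem_of_earlier_detour {L : Type*} [Preorder L] {ρ : Sym2 V → L} {f r : ℕ}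
    {F : Sym2 V → Set (Sym2 V)} (hF : IsFDBlockingSet H (InvImage (· < ·) ρ) f r F) {u v : V}
    (huv : H.Adj u v) (w : H.Walk v u) (hlen : w.length < r)
    (hearlier : ∀ e ∈ w.edges, ρ e < ρ s(u, v)) : ∃ e ∈ w.edges, e ∈ F s(u, v) := by
  classical
  obtain ⟨-, -, hFearlier, hcycle⟩ := hF
  have hsub : w.bypass.edges ⊆ w.edges := w.edges_bypass_subset_edges
  have hnew : s(u, v) ∉ w.bypass.edges := fun h ↦ (hearlier _ (hsub h)).false
  have hclosed : (Walk.cons huv w.bypass).IsCycle :=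
    (Walk.cons_isCycle_iff _ huv).2 ⟨w.bypass_isPath, hnew⟩
  have hshort : (Walk.cons huv w.bypass).length ≤ r := by
    rw [Walk.length_cons]
    exact Nat.succ_le_of_lt (w.length_bypass_le_length.trans_lt hlen)
  obtain ⟨e, heF, he⟩ := hcycle u _ hclosed hshort s(u, v) (by simp) fun e he hne ↦
    hearlier e (hsub ((List.mem_cons.1 he).resolve_left hne))
  have hne : e ≠ s(u, v) := by
    rintro rfl
    exact lt_irrefl _ (hFearlier _ huv _ heF)
  exact ⟨e, hsub ((List.mem_cons.1 he).resolve_left hne), heF⟩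

end EdgeOrder

section WalkFamilies

variable {V : Type*} {H : SimpleGraph V} {s t : V}

theorem adj_neighbor (x : H.neighborSet s) : H.Adj s x := x.2

/-- The walks from `s` to `t` that step from `s` to some `x ∈ S` and continue along a walk
in `A x`. -/
noncomputable def prepend (S : Finset (H.neighborSet s)) (A : ∀ x, Finset (H.Walk x t)) :
    Finset (H.Walk s t) :=
  (S.sigma fun x ↦ A x).map
    ⟨fun p : Σ x : H.neighborSet s, H.Walk x t ↦ Walk.cons (adj_neighbor p.1) p.2, by
      rintro ⟨⟨x, hx⟩, p⟩ ⟨⟨y, hy⟩, q⟩ h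
      cases h
      rfl⟩

open Classical in
/-- The walks of `A` that use an edge of `X`. -/
noncomputable def hitting (X : Set (Sym2 V)) (A : Finset (H.Walk s t)) : Finset (H.Walk s t) :=
  {p ∈ A | ∃ e ∈ p.edges, e ∈ X}

open Classical in
/-- The walks of `A` that use no edge of `X`. -/
noncomputable def avoiding (X : Set (Sym2 V)) (A : Finset (H.Walk s t)) : Finset (H.Walk s t) :=
  {p ∈ A | ∀ e ∈ p.edges, e ∉ X}

/-- `A` if it has at most `c` elements, and `∅` otherwise: overfull fibres are discarded
altogether. -/
noncomputable def truncate {α : Type*} (c : ℕ) (A : Finset α) : Finset α :=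
  if #A ≤ c then A else ∅

theorem mem_prepend {S : Finset (H.neighborSet s)} {A : ∀ x, Finset (H.Walk x t)}
    {p : H.Walk s t} :
    p ∈ prepend S A ↔ ∃ x ∈ S, ∃ q ∈ A x, Walk.cons (adj_neighbor x) q = p := by
  simp only [prepend, mem_map, mem_sigma, Sigma.exists, and_assoc, exists_and_left]
  rfl

theorem card_prepend (S : Finset (H.neighborSet s)) (A : ∀ x, Finset (H.Walk x t)) :
    #(prepend S A) = ∑ x ∈ S, #(A x) := by
  rw [prepend, card_map, card_sigma]

theorem prepend_mono {S : Finset (H.neighborSet s)} {A B : ∀ x, Finset (H.Walk x t)}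
    (hAB : ∀ x, A x ⊆ B x) : prepend S A ⊆ prepend S B :=
  map_subset_map.2 (sigma_mono Subset.rfl fun x ↦ hAB x)

theorem mem_hitting {X : Set (Sym2 V)} {A : Finset (H.Walk s t)} {p : H.Walk s t} :
    p ∈ hitting X A ↔ p ∈ A ∧ ∃ e ∈ p.edges, e ∈ X := by
  simp only [hitting, mem_filter]

theorem mem_avoiding {X : Set (Sym2 V)} {A : Finset (H.Walk s t)} {p : H.Walk s t} :
    p ∈ avoiding X A ↔ p ∈ A ∧ ∀ e ∈ p.edges, e ∉ X := by
  simp only [avoiding, mem_filter]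

theorem avoiding_subset (X : Set (Sym2 V)) (A : Finset (H.Walk s t)) : avoiding X A ⊆ A :=
  fun _ hp ↦ (mem_avoiding.1 hp).1

theorem avoiding_mono (X : Set (Sym2 V)) {A B : Finset (H.Walk s t)} (hAB : A ⊆ B) :
    avoiding X A ⊆ avoiding X B :=
  fun _ hp ↦ mem_avoiding.2 ((mem_avoiding.1 hp).imp_left (@hAB _))

theorem card_avoiding_add_card_hitting (X : Set (Sym2 V)) (A : Finset (H.Walk s t)) :
    #(avoiding X A) + #(hitting X A) = #A := by
  classical
  rw [← card_filter_add_card_filter_not (s := A) (fun p ↦ ∀ e ∈ p.edges, e ∉ X)]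
  simp only [avoiding, hitting, not_forall, not_not, exists_prop]

theorem hitting_mono (X : Set (Sym2 V)) {A B : Finset (H.Walk s t)} (hAB : A ⊆ B) :
    hitting X A ⊆ hitting X B :=
  fun _ hp ↦ mem_hitting.2 ((mem_hitting.1 hp).imp_left (@hAB _))

theorem card_hitting_prepend_le (X : Set (Sym2 V)) [DecidablePred (· ∈ X)]
    (S : Finset (H.neighborSet s))
    (A : ∀ x, Finset (H.Walk x t)) :
    #(hitting X (prepend S A)) ≤
      ∑ x ∈ S with s(s, x.1) ∈ X, #(A x) + ∑ x ∈ S, #(hitting X (A x)) := by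
  classical
  rw [← card_prepend, ← card_prepend S fun x ↦ hitting X (A x)]
  refine (card_le_card fun p hp ↦ ?_).trans (card_union_le _ _)
  obtain ⟨hp, e, he, heX⟩ := mem_hitting.1 hp
  obtain ⟨x, hx, q, hq, rfl⟩ := mem_prepend.1 hp
  rw [mem_union, mem_prepend, mem_prepend]
  obtain rfl | he := List.mem_cons.1 he
  · exact .inl ⟨x, mem_filter.2 ⟨hx, heX⟩, q, hq, rfl⟩
  · exact .inr ⟨x, hx, q, mem_hitting.2 ⟨hq, e, he, heX⟩, rfl⟩

theorem truncate_subset {α : Type*} (c : ℕ) (A : Finset α) : truncate c A ⊆ A := by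
  unfold truncate
  split_ifs <;> simp

theorem card_truncate_le {α : Type*} (c : ℕ) (A : Finset α) : #(truncate c A) ≤ c := by
  unfold truncate
  split_ifs with h <;> simp [h]

theorem mul_card_le_mul_card_truncate_add {α : Type*} {A : Finset α} {c h : ℕ} (hc : 0 < c)
    (hA : #A ^ 2 ≤ c * h) (C : ℕ) : C * #A ≤ C * #(truncate (C * c) A) + h := by
  unfold truncate
  split_ifs with hfull
  · exact Nat.le_add_right _ _
  · have hlarge : c * (C * #A) ≤ c * h := by nlinarith
    simpa using Nat.le_of_mul_le_mul_left hlarge hc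

theorem card_incident_neighbors_le [Finite V] {X : Set (Sym2 V)} [DecidablePred (· ∈ X)]
    {f : ℕ} {v : V} (hX : {e ∈ X | v ∈ e}.ncard ≤ f) (S : Finset (H.neighborSet v)) :
    #{x ∈ S | s(v, x.1) ∈ X} ≤ f := by
  refine le_trans ?_ hX
  rw [← Set.ncard_coe_finset]
  refine Set.ncard_le_ncard_of_injOn (fun x ↦ s(v, x.1)) (fun x hx ↦ ?_) ?_ (Set.toFinite _)
  · exact ⟨(mem_filter.1 hx).2, Sym2.mem_mk_left _ _⟩
  · exact fun x _ y _ hxy ↦ Subtype.ext (Sym2.congr_right.1 hxy)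

open Classical in
/-- The walks of length `j` from `s` to `t` whose steps are taken from the layers
`N (j - 1), …, N 0`, in this order. -/
noncomputable def layerWalks (N : ℕ → ∀ x : V, Finset (H.neighborSet x)) :
    ℕ → ∀ s t : V, Finset (H.Walk s t)
  | 0, s, t => if h : s = t then {Walk.nil.copy rfl h} else ∅
  | j + 1, s, t => prepend (N j s) fun x ↦ layerWalks N j x t

variable {N : ℕ → ∀ x : V, Finset (H.neighborSet x)}

theorem length_of_mem_layerWalks {j : ℕ} {s t : V} {p : H.Walk s t}
    (hp : p ∈ layerWalks N j s t) : p.length = j := by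
  induction j generalizing s with
  | zero =>
    unfold layerWalks at hp
    split_ifs at hp with h
    · subst h
      simp_all
    · simp at hp
  | succ j ih =>
    obtain ⟨x, -, q, hq, rfl⟩ := mem_prepend.1 hp
    rw [Walk.length_cons, ih hq]

theorem sum_card_layerWalks_zero [Fintype V] (s : V) : ∑ t, #(layerWalks N 0 s t) = 1 := by
  classical
  simp [layerWalks, apply_dite card]

theorem sum_card_layerWalks_succ [Fintype V] (j : ℕ) (s : V) :
    ∑ t, #(layerWalks N (j + 1) s t) = ∑ x ∈ N j s, ∑ t, #(layerWalks N j x t) := by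
  simp only [layerWalks, card_prepend]
  exact sum_comm

theorem sum_card_layerWalks_one [Fintype V] (s : V) :
    ∑ t, #(layerWalks N 1 s t) = #(N 0 s) := by
  simp [sum_card_layerWalks_succ, sum_card_layerWalks_zero]

theorem card_layerWalks_one_le (s t : V) : #(layerWalks N 1 s t) ≤ 1 := by
  refine card_le_one.2 fun p hp q hq ↦ ?_
  have hp := length_of_mem_layerWalks hp
  have hq := length_of_mem_layerWalks hq
  cases p with
  | nil => simp at hp
  | cons h p =>
    cases q with
    | nil => simp at hq
    | cons h' q =>
      cases p with
      | cons => simp at hp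
      | nil =>
        cases q with
        | cons => simp at hq
        | nil => rfl

theorem sum_card_layerWalks_le [Fintype V] {d : ℕ} (hN : ∀ i x, #(N i x) ≤ d) (j : ℕ) (s : V) :
    ∑ t, #(layerWalks N j s t) ≤ d ^ j := by
  induction j generalizing s with
  | zero => rw [sum_card_layerWalks_zero, pow_zero]
  | succ j ih =>
    calc ∑ t, #(layerWalks N (j + 1) s t)
        = ∑ x ∈ N j s, ∑ t, #(layerWalks N j x t) := sum_card_layerWalks_succ j s
      _ ≤ #(N j s) * d ^ j := sum_le_card_nsmul _ _ _ fun x _ ↦ ih x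
      _ ≤ d * d ^ j := Nat.mul_le_mul_right _ (hN j s)
      _ = d ^ (j + 1) := (pow_succ' d j).symm

theorem mul_sum_card_hitting_layerWalks_le [Fintype V] {d f : ℕ} (hN : ∀ i x, #(N i x) ≤ d)
    {X : Set (Sym2 V)} (hX : ∀ v, {e ∈ X | v ∈ e}.ncard ≤ f) (j : ℕ) (s : V) :
    d * ∑ t, #(hitting X (layerWalks N j s t)) ≤ j * f * d ^ j := by
  classical
  induction j generalizing s with
  | zero =>
    suffices h : ∀ t, hitting X (layerWalks N 0 s t) = ∅ by simp [h]
    intro t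
    refine filter_eq_empty_iff.2 fun p hp ↦ ?_
    rw [List.eq_nil_of_length_eq_zero ((p.length_edges).trans (length_of_mem_layerWalks hp))]
    simp
  | succ j ih =>
    have hsplit : ∑ t, #(hitting X (layerWalks N (j + 1) s t)) ≤
        ∑ x ∈ N j s with s(s, x.1) ∈ X, ∑ t, #(layerWalks N j x t) +
          ∑ x ∈ N j s, ∑ t, #(hitting X (layerWalks N j x t)) := by
      rw [sum_comm, sum_comm (s := N j s), ← sum_add_distrib]
      exact sum_le_sum fun t _ ↦ card_hitting_prepend_le X _ _
    have hfirst : ∑ x ∈ N j s with s(s, x.1) ∈ X, ∑ t, #(layerWalks N j x t) ≤ f * d ^ j := by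
      refine (sum_le_card_nsmul _ _ _ fun x _ ↦ sum_card_layerWalks_le hN j x.1).trans ?_
      exact Nat.mul_le_mul_right _ (card_incident_neighbors_le (hX s) _)
    have hlater : d * ∑ x ∈ N j s, ∑ t, #(hitting X (layerWalks N j x t)) ≤
        d * (j * f * d ^ j) := by
      rw [mul_sum]
      refine (sum_le_card_nsmul _ _ _ fun x _ ↦ ih x.1).trans ?_
      exact Nat.mul_le_mul_right _ (hN j s)
    calc d * ∑ t, #(hitting X (layerWalks N (j + 1) s t))
        ≤ d * (∑ x ∈ N j s with s(s, x.1) ∈ X, ∑ t, #(layerWalks N j x t) +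
            ∑ x ∈ N j s, ∑ t, #(hitting X (layerWalks N j x t))) := Nat.mul_le_mul_left d hsplit
      _ ≤ d * (f * d ^ j) + d * (j * f * d ^ j) := by
        rw [mul_add]
        exact add_le_add (Nat.mul_le_mul_left d hfirst) hlater
      _ = (j + 1) * f * d ^ (j + 1) := by ring

end WalkFamilies

section Layering

variable {V L : Type*} [LinearOrder L] {H : SimpleGraph V} {ρ : Sym2 V → L} {d : ℕ}
  {N : ℕ → ∀ x : V, Finset (H.neighborSet x)}

/-- Layers of at most `d` edges `N i x` chosen at each vertex `x`, such that an edge of layer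
`i + 1` can be continued at its far end by exactly `d` edges of layer `i`, all with smaller
label. -/
structure IsDescendingLayering (ρ : Sym2 V → L) (d : ℕ)
    (N : ℕ → ∀ x : V, Finset (H.neighborSet x)) : Prop where
  card_le : ∀ i x, #(N i x) ≤ d
  card_eq : ∀ i x, ∀ y ∈ N (i + 1) x, #(N i y) = d
  label_lt : ∀ i x, ∀ y ∈ N (i + 1) x, ∀ z ∈ N i y, ρ s(y, z) < ρ s(x, y)

theorem IsDescendingLayering.label_lt_of_mem_layerWalks (hN : IsDescendingLayering ρ d N)
    {j : ℕ} {s t : V} {x : H.neighborSet s} (hx : x ∈ N j s) {p : H.Walk x t}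
    (hp : p ∈ layerWalks N j x t) : ∀ e ∈ p.edges, ρ e < ρ s(s, x) := by
  induction j generalizing s with
  | zero =>
    rw [List.eq_nil_of_length_eq_zero (p.length_edges.trans (length_of_mem_layerWalks hp))]
    simp
  | succ j ih =>
    obtain ⟨y, hy, q, hq, rfl⟩ := mem_prepend.1 hp
    have hstep : ρ s(↑x, ↑y) < ρ s(s, ↑x) := hN.label_lt j s x hx y hy
    refine List.forall_mem_cons.2 ⟨hstep, fun e he ↦ ?_⟩
    exact (ih hy hq e he).trans hstep

omit [LinearOrder L] in
theorem injective_label_neighbor (hρ : Set.InjOn ρ H.edgeSet) (x : V) :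
    Function.Injective fun y : H.neighborSet x ↦ ρ s(x, y.1) :=
  fun y z h ↦ Subtype.ext (Sym2.congr_right.1 (hρ y.2 z.2 h))

theorem exists_peeling [Fintype V] (hρ : Set.InjOn ρ H.edgeSet) (d : ℕ) (E : Finset (Sym2 V)) :
    ∃ (S : ∀ x : V, Finset (H.neighborSet x)) (R : Finset (Sym2 V)),
      (∀ x, #(S x) ≤ d) ∧ (∀ x, ∀ y ∈ S x, s(x, y.1) ∈ E) ∧
      R ⊆ E ∧ #E ≤ #R + Fintype.card V * d ∧
      ∀ x, ∀ y : H.neighborSet x, s(x, y.1) ∈ R →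
        #(S x) = d ∧ ∀ z ∈ S x, ρ s(x, z) < ρ s(x, y) := by
  classical
  choose S hSE hSd hS using fun x ↦
    exists_initialSegment (injective_label_neighbor hρ x) {y | s(x, y.1) ∈ E} d
  let P : Finset (Sym2 V) := univ.biUnion fun x ↦ (S x).image fun y ↦ s(x, y.1)
  have hP : #P ≤ Fintype.card V * d :=
    card_biUnion_le_card_mul _ _ d fun x _ ↦ card_image_le.trans (hSd x)
  refine ⟨S, E \ P, hSd, fun x y hy ↦ (mem_filter.1 (hSE x hy)).2, sdiff_subset, ?_, ?_⟩
  · have := le_card_sdiff P E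
    omega
  · intro x y hy
    obtain ⟨hyE, hyP⟩ := mem_sdiff.1 hy
    refine hS x y (mem_filter.2 ⟨mem_univ _, hyE⟩) fun hyS ↦ hyP ?_
    exact mem_biUnion.2 ⟨x, mem_univ x, mem_image_of_mem _ hyS⟩

theorem exists_isDescendingLayering [Fintype V] [Fintype H.edgeSet]
    (hρ : Set.InjOn ρ H.edgeSet) {i d : ℕ}
    (hcard : (i + 1) * (Fintype.card V * d) < #H.edgeFinset) :
    ∃ N : ℕ → ∀ x : V, Finset (H.neighborSet x),
      IsDescendingLayering ρ d N ∧ ∃ s, #(N i s) = d := by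
  choose S R hSd hSE hRE hRcard hR using exists_peeling hρ d
  let E : ℕ → Finset (Sym2 V) := fun j ↦ R^[j] H.edgeFinset
  have hEsucc : ∀ j, E (j + 1) = R (E j) := fun j ↦ Function.iterate_succ_apply' R j _
  have hEsub : ∀ j, E j ⊆ H.edgeFinset := by
    intro j
    induction j with
    | zero => exact Subset.rfl
    | succ j ih => exact hEsucc j ▸ (hRE (E j)).trans ih
  have hEcard : ∀ j, #H.edgeFinset ≤ #(E j) + j * (Fintype.card V * d) := by
    intro j
    induction j with
    | zero => simp [E]
    | succ j ih =>
      have := hRcard (E j)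
      rw [hEsucc, add_mul]
      omega
  have hcontinue : ∀ j x (y : H.neighborSet x), s(x, y.1) ∈ E (j + 1) →
      #(S (E j) y) = d ∧ ∀ z ∈ S (E j) y, ρ s(y, z) < ρ s(x, y) := by
    intro j x y hxy
    rw [hEsucc, Sym2.eq_swap] at hxy
    rw [Sym2.eq_swap (a := x)]
    exact hR (E j) y ⟨x, (adj_neighbor y).symm⟩ hxy
  refine ⟨fun j x ↦ S (E j) x, ⟨fun j ↦ hSd (E j), ?_, ?_⟩, ?_⟩
  · exact fun j x y hy ↦ (hcontinue j x y (hSE _ x y hy)).1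
  · exact fun j x y hy ↦ (hcontinue j x y (hSE _ x y hy)).2
  · have hleft : (E (i + 1)).Nonempty := by
      have := hEcard (i + 1)
      exact card_pos.1 (by omega)
    obtain ⟨e, he⟩ := hleft
    induction e with
    | _ x s =>
      have hxs : H.Adj x s := mem_edgeFinset.1 (hEsub _ he)
      exact ⟨s, (hcontinue i x ⟨s, hxs⟩ he).1⟩

end Layering

section Counting

variable {V : Type} {H : SimpleGraph V} {F : Sym2 V → Set (Sym2 V)} {d : ℕ}
  {N : ℕ → ∀ x : V, Finset (H.neighborSet x)}

/-- The walks that start with a step from `s` to some `x ∈ S` and continue along a walk in `G x`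
using no edge of `F s(s, x)`. -/
noncomputable def unblocked (F : Sym2 V → Set (Sym2 V)) {s t : V} (S : Finset (H.neighborSet s))
    (G : ∀ x, Finset (H.Walk x t)) : Finset (H.Walk s t) :=
  prepend S fun x ↦ avoiding (F s(s, x)) (G x)

/-- The walks of length `j + 1` through the layers that are retained when, from the second step
on, blocked walks and then all pairs of ends joined by more than `C ^ j` walks are discarded. -/
noncomputable def goodWalks (N : ℕ → ∀ x : V, Finset (H.neighborSet x))
    (F : Sym2 V → Set (Sym2 V)) (C : ℕ) : ℕ → ∀ s t : V, Finset (H.Walk s t)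
  | 0, s, t => layerWalks N 1 s t
  | j + 1, s, t =>
    truncate (C * C ^ j) (unblocked F (N (j + 1) s) fun x ↦ goodWalks N F C j x t)

theorem goodWalks_subset_layerWalks (C j : ℕ) (s t : V) :
    goodWalks N F C j s t ⊆ layerWalks N (j + 1) s t := by
  induction j generalizing s with
  | zero => exact Subset.rfl
  | succ j ih =>
    exact (truncate_subset _ _).trans (prepend_mono fun x ↦ (avoiding_subset _ _).trans (ih x))

theorem card_goodWalks_le (C j : ℕ) (s t : V) : #(goodWalks N F C j s t) ≤ C ^ j := by
  cases j with
  | zero => exact card_layerWalks_one_le s t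
  | succ j => exact (card_truncate_le _ _).trans_eq (pow_succ' C j).symm

variable {L : Type*} [LinearOrder L] {ρ : Sym2 V → L} {f k : ℕ}

/-- The two walks, run from `x` to their common end and back through `y` to `s`, form a detour
around `s(s, x)`. -/
theorem exists_mem_of_common_end (hN : IsDescendingLayering ρ d N)
    (hF : IsFDBlockingSet H (InvImage (· < ·) ρ) f (2 * k) F) {j : ℕ} (hj : j + 1 ≤ k) {s t : V}
    {x y : H.neighborSet s} (hx : x ∈ N j s) (hy : y ∈ N j s) (hyx : ρ s(s, y.1) < ρ s(s, x.1))
    {p : H.Walk x t} (hp : p ∈ avoiding (F s(s, x)) (layerWalks N j x t))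
    {q : H.Walk y t} (hq : q ∈ layerWalks N j y t) :
    ∃ e ∈ (Walk.cons (adj_neighbor y) q).edges, e ∈ F s(s, x) := by
  obtain ⟨hp, havoid⟩ := mem_avoiding.1 hp
  let w : H.Walk x s := p.append (Walk.cons (adj_neighbor y) q).reverse
  have hedges : ∀ e, e ∈ w.edges ↔ e ∈ p.edges ∨ e ∈ (Walk.cons (adj_neighbor y) q).edges := by
    intro e
    rw [Walk.edges_append, Walk.edges_reverse, List.mem_append, List.mem_reverse]
  have hlen : w.length < 2 * k := by
    rw [Walk.length_append, Walk.length_reverse, Walk.length_cons, length_of_mem_layerWalks hp,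
      length_of_mem_layerWalks hq]
    omega
  have hearlier : ∀ e ∈ w.edges, ρ e < ρ s(s, x.1) := by
    intro e he
    obtain he | he := (hedges e).1 he
    · exact hN.label_lt_of_mem_layerWalks hx hp e he
    · obtain rfl | he := List.mem_cons.1 he
      · exact hyx
      · exact (hN.label_lt_of_mem_layerWalks hy hq e he).trans hyx
  obtain ⟨e, he, heF⟩ := exists_mem_of_earlier_detour hF (adj_neighbor x) w hlen hearlier
  exact ⟨e, ((hedges e).1 he).resolve_left fun hep ↦ havoid e hep heF, heF⟩

theorem sq_card_unblocked_le (hρ : Set.InjOn ρ H.edgeSet) (hN : IsDescendingLayering ρ d N)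
    (hF : IsFDBlockingSet H (InvImage (· < ·) ρ) f (2 * k) F) {j : ℕ} (hj : j + 1 ≤ k) {s t : V}
    {G : ∀ x, Finset (H.Walk x t)} (hG : ∀ x, G x ⊆ layerWalks N j x t) {c : ℕ}
    (hc : ∀ x, #(G x) ≤ c) :
    #(unblocked F (N j s) G) ^ 2 ≤ c * (#(unblocked F (N j s) G) +
      2 * ∑ x ∈ N j s, #(hitting (F s(s, x.1)) (layerWalks N (j + 1) s t))) := by
  rw [unblocked, card_prepend]
  refine sq_sum_le (injective_label_neighbor hρ s) (N j s)
    (fun x _ ↦ (card_le_card (avoiding_subset _ _)).trans (hc x)) fun x hx hne ↦ ?_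
  obtain ⟨p, hp⟩ := card_ne_zero.1 hne
  have hp' : p ∈ avoiding (F s(s, x.1)) (layerWalks N j x t) :=
    avoiding_mono _ (hG x) hp
  rw [← card_prepend _ fun y ↦ avoiding (F s(s, y)) (G y)]
  refine card_le_card fun r hr ↦ ?_
  obtain ⟨y, hy, q, hq, rfl⟩ := mem_prepend.1 hr
  obtain ⟨hy, hyx⟩ := mem_filter.1 hy
  have hq' : q ∈ layerWalks N j y t := hG y (avoiding_subset _ _ hq)
  exact mem_hitting.2 ⟨mem_prepend.2 ⟨y, hy, q, hq', rfl⟩,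
    exists_mem_of_common_end hN hF hj hx hy hyx hp' hq'⟩

variable [Fintype V]

theorem sum_card_unblocked (j : ℕ) (s : V) (G : ∀ x t : V, Finset (H.Walk x t)) :
    ∑ t, #(unblocked F (N j s) fun x ↦ G x t) =
      ∑ x ∈ N j s, ∑ t, #(avoiding (F s(s, x.1)) (G x t)) := by
  simp only [unblocked, card_prepend]
  exact sum_comm

theorem sum_card_le_sum_card_avoiding_add (hN : ∀ i x, #(N i x) ≤ d) (hd : 4 * k ^ 2 * f ≤ d)
    (hd0 : 0 < d) {X : Set (Sym2 V)} (hX : ∀ v, {e ∈ X | v ∈ e}.ncard ≤ f) {j : ℕ} (hj : j ≤ k)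
    {x : V} {G : ∀ t, Finset (H.Walk x t)} (hG : ∀ t, G t ⊆ layerWalks N j x t) :
    4 * k * ∑ t, #(G t) ≤ 4 * k * ∑ t, #(avoiding X (G t)) + d ^ j := by
  have hsplit : ∑ t, #(G t) ≤
      ∑ t, #(avoiding X (G t)) + ∑ t, #(hitting X (layerWalks N j x t)) := by
    rw [← sum_add_distrib]
    refine sum_le_sum fun t _ ↦ ?_
    rw [← card_avoiding_add_card_hitting X (G t)]
    exact Nat.add_le_add_left (card_le_card (hitting_mono X (hG t))) _
  have hhit : 4 * k * ∑ t, #(hitting X (layerWalks N j x t)) ≤ d ^ j := by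
    refine Nat.le_of_mul_le_mul_left ?_ hd0
    calc d * (4 * k * ∑ t, #(hitting X (layerWalks N j x t)))
        = 4 * k * (d * ∑ t, #(hitting X (layerWalks N j x t))) := by ring
      _ ≤ 4 * k * (j * f * d ^ j) :=
        Nat.mul_le_mul_left _ (mul_sum_card_hitting_layerWalks_le hN hX j x)
      _ ≤ 4 * k * (k * f * d ^ j) := by gcongr
      _ = 4 * k ^ 2 * f * d ^ j := by ring
      _ ≤ d * d ^ j := Nat.mul_le_mul_right _ hd
  calc 4 * k * ∑ t, #(G t)
      ≤ 4 * k * (∑ t, #(avoiding X (G t)) + ∑ t, #(hitting X (layerWalks N j x t))) :=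
        Nat.mul_le_mul_left _ hsplit
    _ ≤ 4 * k * ∑ t, #(avoiding X (G t)) + d ^ j := by
      rw [mul_add]
      exact Nat.add_le_add_left hhit _

theorem sum_card_unblocked_le_sum_card_truncate_add (hρ : Set.InjOn ρ H.edgeSet)
    (hN : IsDescendingLayering ρ d N) (hF : IsFDBlockingSet H (InvImage (· < ·) ρ) f (2 * k) F)
    (hf : 0 < f) (hd0 : 0 < d) {j : ℕ} (hj : j + 1 ≤ k) (s : V)
    {G : ∀ x t, Finset (H.Walk x t)} (hG : ∀ x t, G x t ⊆ layerWalks N j x t) {c : ℕ}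
    (hc0 : 0 < c) (hc : ∀ x t, #(G x t) ≤ c) :
    4 * k * ∑ t, #(unblocked F (N j s) fun x ↦ G x t) ≤
      4 * k * ∑ t, #(truncate (12 * k ^ 2 * f * c) (unblocked F (N j s) fun x ↦ G x t)) +
        d ^ (j + 1) := by
  set U : ∀ t, Finset (H.Walk s t) := fun t ↦ unblocked F (N j s) fun x ↦ G x t
  let h : V → ℕ := fun t ↦ ∑ x ∈ N j s, #(hitting (F s(s, x.1)) (layerWalks N (j + 1) s t))
  have hfibre : ∀ t, 12 * k ^ 2 * f * #(U t) ≤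
      12 * k ^ 2 * f * #(truncate (12 * k ^ 2 * f * c) (U t)) + (#(U t) + 2 * h t) := fun t ↦
    mul_card_le_mul_card_truncate_add hc0
      (sq_card_unblocked_le hρ hN hF hj (fun x ↦ hG x t) fun x ↦ hc x t) _
  have hU : ∑ t, #(U t) ≤ d ^ (j + 1) := by
    refine le_trans (sum_le_sum fun t _ ↦ card_le_card ?_)
      (sum_card_layerWalks_le hN.card_le (j + 1) s)
    exact prepend_mono fun x ↦ (avoiding_subset _ _).trans (hG x t)
  have hh : ∑ t, h t ≤ (j + 1) * f * d ^ (j + 1) := by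
    refine Nat.le_of_mul_le_mul_left ?_ hd0
    rw [sum_comm, mul_sum]
    refine (sum_le_card_nsmul _ _ _ fun x _ ↦ mul_sum_card_hitting_layerWalks_le hN.card_le
      (hF.2.1 _ (adj_neighbor x)) (j + 1) s).trans ?_
    exact Nat.mul_le_mul_right _ (hN.card_le j s)
  have hcoeff : 1 + 2 * (j + 1) * f ≤ 3 * k * f := by nlinarith
  have hscaled : 3 * k * f * (4 * k * ∑ t, #(U t)) ≤ 3 * k * f *
      (4 * k * ∑ t, #(truncate (12 * k ^ 2 * f * c) (U t)) + d ^ (j + 1)) := by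
    have hsum := sum_le_sum fun t (_ : t ∈ univ) ↦ hfibre t
    simp only [sum_add_distrib, ← mul_sum] at hsum
    nlinarith [Nat.mul_le_mul_right (d ^ (j + 1)) hcoeff]
  have hk : 0 < k := by omega
  exact Nat.le_of_mul_le_mul_left hscaled (by positivity)

theorem le_sum_card_goodWalks (hρ : Set.InjOn ρ H.edgeSet) (hN : IsDescendingLayering ρ d N)
    (hF : IsFDBlockingSet H (InvImage (· < ·) ρ) f (2 * k) F) (hf : 0 < f)
    (hd : 4 * k ^ 2 * f ≤ d) {j : ℕ} (hj : j + 1 ≤ k) {s : V} (hs : #(N j s) = d) :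
    2 * k * d ^ (j + 1) ≤
      2 * k * ∑ t, #(goodWalks N F (12 * k ^ 2 * f) j s t) + j * d ^ (j + 1) := by
  have hk : 0 < k := by omega
  have hd0 : 0 < d := lt_of_lt_of_le (by positivity) hd
  induction j generalizing s with
  | zero => simp [goodWalks, sum_card_layerWalks_one, hs]
  | succ j ih =>
    let G : ∀ x t, Finset (H.Walk x t) := goodWalks N F (12 * k ^ 2 * f) j
    have hG : ∀ x t, G x t ⊆ layerWalks N (j + 1) x t := goodWalks_subset_layerWalks _ j
    have hprev : ∀ x ∈ N (j + 1) s, 4 * k * d ^ (j + 1) ≤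
        4 * k * ∑ t, #(avoiding (F s(s, x.1)) (G x t)) + (2 * j + 1) * d ^ (j + 1) := by
      intro x hx
      have hgood := ih (by omega) (hN.card_eq j s x hx)
      have havoid := sum_card_le_sum_card_avoiding_add hN.card_le hd hd0
        (hF.2.1 s(s, x.1) (adj_neighbor x)) (by omega) (hG x)
      linarith
    have hunblocked : 4 * k * d ^ (j + 2) ≤
        4 * k * ∑ t, #(unblocked F (N (j + 1) s) fun x ↦ G x t) +
          (2 * j + 1) * d ^ (j + 2) := by
      have hsum := sum_le_sum hprev
      rw [sum_add_distrib, ← mul_sum (N (j + 1) s) fun x ↦ ∑ t, #(avoiding (F s(s, x.1)) (G x t)),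
        ← sum_card_unblocked, sum_const, sum_const, hs,
        smul_eq_mul, smul_eq_mul] at hsum
      calc 4 * k * d ^ (j + 2) = d * (4 * k * d ^ (j + 1)) := by ring
        _ ≤ _ := hsum
        _ = _ := by ring
    have htruncate : 4 * k * ∑ t, #(unblocked F (N (j + 1) s) fun x ↦ G x t) ≤
        4 * k * ∑ t, #(goodWalks N F (12 * k ^ 2 * f) (j + 1) s t) + d ^ (j + 2) :=
      sum_card_unblocked_le_sum_card_truncate_add hρ hN hF hf hd0 hj s hG (by positivity)
        (card_goodWalks_le (12 * k ^ 2 * f) j)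
    linarith

theorem card_edgeFinset_le [Fintype H.edgeSet] (hρ : Set.InjOn ρ H.edgeSet)
    (hF : IsFDBlockingSet H (InvImage (· < ·) ρ) f (2 * k) F) (hf : 0 < f) (hk : 0 < k)
    (hd : 4 * k ^ 2 * f ≤ d)
    (hpow : 2 * Fintype.card V * (12 * k ^ 2 * f) ^ (k - 1) < d ^ k) :
    #H.edgeFinset ≤ k * (Fintype.card V * d) := by
  by_contra! hmany
  obtain ⟨i, rfl⟩ : ∃ i, k = i + 1 := ⟨k - 1, by omega⟩
  obtain ⟨N, hN, s, hs⟩ := exists_isDescendingLayering hρ hmany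
  set C := 12 * (i + 1) ^ 2 * f
  set W := ∑ t, #(goodWalks N F C i s t)
  have hlower : 2 * (i + 1) * d ^ (i + 1) ≤ 2 * (i + 1) * W + i * d ^ (i + 1) :=
    le_sum_card_goodWalks hρ hN hF hf hd le_rfl hs
  have hupper : W ≤ Fintype.card V * C ^ i :=
    sum_le_card_nsmul _ _ _ fun t _ ↦ card_goodWalks_le C i s t
  have hhalf : d ^ (i + 1) ≤ 2 * W := by
    refine Nat.le_of_mul_le_mul_left (c := i + 1) ?_ hk
    linarith [Nat.zero_le (d ^ (i + 1))]
  rw [Nat.add_sub_cancel] at hpow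
  linarith

end Counting


section RealBound

variable {n k f : ℕ}

theorem rpow_mul_rpow_pow (n f : ℕ) (hk : 0 < k) :
    ((f : ℝ) ^ (1 - 1 / (k : ℝ)) * (n : ℝ) ^ (1 / (k : ℝ))) ^ k = (f : ℝ) ^ (k - 1) * n := by
  have hk0 : (k : ℝ) ≠ 0 := by positivity
  rw [mul_pow, ← Real.rpow_mul_natCast f.cast_nonneg, ← Real.rpow_mul_natCast n.cast_nonneg,
    sub_mul, one_div_mul_cancel hk0, one_mul, Real.rpow_one, ← Nat.cast_pred hk,
    Real.rpow_natCast]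

theorem min_le_rpow_mul_rpow (n f : ℕ) (hk : 0 < k) :
    min (n : ℝ) f ≤ (f : ℝ) ^ (1 - 1 / (k : ℝ)) * (n : ℝ) ^ (1 / (k : ℝ)) := by
  set m : ℝ := min n f
  have hm : 0 ≤ m := le_min n.cast_nonneg f.cast_nonneg
  have hexp : 0 ≤ 1 - 1 / (k : ℝ) := by
    rw [sub_nonneg, one_div]
    exact Nat.cast_inv_le_one k
  calc m = m ^ (1 - 1 / (k : ℝ)) * m ^ (1 / (k : ℝ)) := by
        rw [← Real.rpow_add_of_nonneg hm hexp (by positivity), sub_add_cancel, Real.rpow_one]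
    _ ≤ (f : ℝ) ^ (1 - 1 / (k : ℝ)) * (n : ℝ) ^ (1 / (k : ℝ)) := by
        gcongr
        · exact min_le_right _ _
        · exact min_le_left _ _

theorem mul_pow_three_le_pow (hk : 0 < k) : 25 * k ^ 3 ≤ (100 * k) ^ k := by
  obtain rfl | rfl | h3 : k = 1 ∨ k = 2 ∨ 3 ≤ k := by omega
  · norm_num
  · norm_num
  · calc 25 * k ^ 3 ≤ (100 * k) ^ 3 := by
          rw [mul_pow]
          gcongr
          norm_num
      _ ≤ (100 * k) ^ k := Nat.pow_le_pow_right (by omega) h3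

theorem two_mul_mul_pow_lt_pow_of_le (hn : 0 < n) (hf : 0 < f) (hk : 0 < k) {d X : ℝ}
    (hX : 0 ≤ X) (hXpow : X ^ k = (f : ℝ) ^ (k - 1) * n) (hd : 24 * (k : ℝ) ^ 2 * X ≤ d) :
    2 * n * (12 * (k : ℝ) ^ 2 * f) ^ (k - 1) < d ^ k := by
  have hk1 : (1 : ℝ) ≤ k ^ 2 := one_le_pow₀ (by exact_mod_cast hk)
  have hconst : 2 * (12 * (k : ℝ) ^ 2) ^ (k - 1) < (24 * (k : ℝ) ^ 2) ^ k := by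
    calc 2 * (12 * (k : ℝ) ^ 2) ^ (k - 1) ≤ 2 * (24 * (k : ℝ) ^ 2) ^ (k - 1) := by
          gcongr
          norm_num
      _ < 24 * (k : ℝ) ^ 2 * (24 * (k : ℝ) ^ 2) ^ (k - 1) := by
          gcongr
          linarith
      _ = (24 * (k : ℝ) ^ 2) ^ k := mul_pow_sub_one hk.ne' _
  calc 2 * n * (12 * (k : ℝ) ^ 2 * f) ^ (k - 1)
      = 2 * (12 * (k : ℝ) ^ 2) ^ (k - 1) * ((f : ℝ) ^ (k - 1) * n) := by
        rw [mul_pow]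
        ring
    _ < (24 * (k : ℝ) ^ 2) ^ k * ((f : ℝ) ^ (k - 1) * n) := by gcongr
    _ = (24 * (k : ℝ) ^ 2 * X) ^ k := by rw [mul_pow _ X, hXpow]
    _ ≤ d ^ k := by gcongr

variable {V : Type} [Fintype V] {H : SimpleGraph V} [Fintype H.edgeSet]

theorem card_edgeFinset_le_of_card_le (hk : 0 < k) (hV : Fintype.card V ≤ f) :
    (#H.edgeFinset : ℝ) ≤ Fintype.card V *
      ((f : ℝ) ^ (1 - 1 / (k : ℝ)) * (Fintype.card V : ℝ) ^ (1 / (k : ℝ))) := by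
  have hVX := min_le_rpow_mul_rpow (Fintype.card V) f hk
  rw [min_eq_left (Nat.cast_le.2 hV)] at hVX
  calc (#H.edgeFinset : ℝ) ≤ (Fintype.card V : ℝ) ^ 2 := by
        exact_mod_cast H.card_edgeFinset_le_card_choose_two.trans (Nat.choose_le_pow _ _)
    _ ≤ _ := by
        rw [sq]
        gcongr

theorem card_edgeFinset_le_of_le_card {L : Type*} [LinearOrder L] {ρ : Sym2 V → L}
    {F : Sym2 V → Set (Sym2 V)} (hρ : Set.InjOn ρ H.edgeSet)
    (hF : IsFDBlockingSet H (InvImage (· < ·) ρ) f (2 * k) F) (hk : 0 < k) (hf : 0 < f)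
    (hV : f ≤ Fintype.card V) :
    (#H.edgeFinset : ℝ) ≤ 25 * k ^ 3 * (Fintype.card V *
      ((f : ℝ) ^ (1 - 1 / (k : ℝ)) * (Fintype.card V : ℝ) ^ (1 / (k : ℝ)))) := by
  set X := (f : ℝ) ^ (1 - 1 / (k : ℝ)) * (Fintype.card V : ℝ) ^ (1 / (k : ℝ))
  have hfX : (f : ℝ) ≤ X :=
    (le_min (Nat.cast_le.2 hV) le_rfl).trans (min_le_rpow_mul_rpow (Fintype.card V) f hk)
  have hX1 : 1 ≤ X := le_trans (by exact_mod_cast hf) hfX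
  have hk1 : (1 : ℝ) ≤ (k : ℝ) ^ 2 := one_le_pow₀ (by exact_mod_cast hk)
  set d := ⌈24 * (k : ℝ) ^ 2 * X⌉₊
  have hdX : 24 * (k : ℝ) ^ 2 * X ≤ d := Nat.le_ceil _
  have hXd : (d : ℝ) ≤ 25 * k ^ 2 * X := by
    have hceil : (d : ℝ) < 24 * k ^ 2 * X + 1 := Nat.ceil_lt_add_one (by positivity)
    linarith [one_le_mul_of_one_le_of_one_le hk1 hX1]
  have hd : 4 * k ^ 2 * f ≤ d := by
    suffices h : (4 * k ^ 2 * f : ℝ) ≤ d from mod_cast h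
    refine le_trans ?_ hdX
    gcongr
    norm_num
  have hpow : 2 * Fintype.card V * (12 * k ^ 2 * f) ^ (k - 1) < d ^ k := by
    exact_mod_cast two_mul_mul_pow_lt_pow_of_le (hf.trans_le hV) hf hk (by positivity)
      (rpow_mul_rpow_pow _ f hk) hdX
  calc (#H.edgeFinset : ℝ) ≤ k * (Fintype.card V * d) := by
        exact_mod_cast card_edgeFinset_le hρ hF hf hk hd hpow
    _ ≤ k * (Fintype.card V * (25 * k ^ 2 * X)) := by gcongr
    _ = 25 * k ^ 3 * (Fintype.card V * X) := by ring

theorem card_edgeFinset_le_mul_rpow {L : Type*} [LinearOrder L] {ρ : Sym2 V → L}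
    {F : Sym2 V → Set (Sym2 V)} (hρ : Set.InjOn ρ H.edgeSet)
    (hF : IsFDBlockingSet H (InvImage (· < ·) ρ) f (2 * k) F) (hk : 0 < k) (hf : 0 < f) :
    (#H.edgeFinset : ℝ) ≤ 25 * k ^ 3 * (Fintype.card V *
      ((f : ℝ) ^ (1 - 1 / (k : ℝ)) * (Fintype.card V : ℝ) ^ (1 / (k : ℝ)))) := by
  obtain hV | hV := le_total f (Fintype.card V)
  · exact card_edgeFinset_le_of_le_card hρ hF hk hf hV
  · refine (card_edgeFinset_le_of_card_le hk hV).trans (le_mul_of_one_le_left (by positivity) ?_)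
    have hk1 : (1 : ℝ) ≤ k ^ 3 := one_le_pow₀ (by exact_mod_cast hk)
    linarith

end RealBound

end FDBlocking

/-- There is an absolute constant `A > 0` such that every `n`-vertex graph
admitting an `f`-FD `2k`-blocking set has at most `f^{1−1/k} · n^{1+1/k} · (A·k)^k` edges. -/
theorem blocking_set_size_bound :
    ∃ A : ℝ, 0 < A ∧
      ∀ (n k f : ℕ), 0 < n → 0 < k → 0 < f →
        ∀ (V : Type) [Fintype V], Fintype.card V = n →
          ∀ (H : SimpleGraph V) (lt : Sym2 V → Sym2 V → Prop)
            (Fb : Sym2 V → Set (Sym2 V)),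
            IsEdgeOrder H lt → IsFDBlockingSet H lt f (2 * k) Fb →
            (H.edgeSet.ncard : ℝ) ≤
              (f : ℝ) ^ (1 - 1 / (k : ℝ)) * (n : ℝ) ^ (1 + 1 / (k : ℝ)) * (A * k) ^ k := by
  classical
  refine ⟨100, by norm_num, ?_⟩
  rintro _ k f - hk hf V _ rfl H lt F horder hF
  obtain ⟨ρ, hρ, hρlt⟩ := FDBlocking.exists_edgeLabelling horder
  have hbound := FDBlocking.card_edgeFinset_le_mul_rpow hρ
    (FDBlocking.isFDBlockingSet_congr hρlt hF) hk hf
  have hconst : 25 * (k : ℝ) ^ 3 ≤ (100 * k) ^ k := by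
    exact_mod_cast FDBlocking.mul_pow_three_le_pow hk
  have hsplit : (Fintype.card V : ℝ) ^ (1 + 1 / (k : ℝ)) =
      Fintype.card V * (Fintype.card V : ℝ) ^ (1 / (k : ℝ)) :=
    Real.rpow_one_add' (Nat.cast_nonneg _) (by positivity)
  rw [← coe_edgeFinset, Set.ncard_coe_finset, hsplit, mul_left_comm, mul_comm]
  exact hbound.trans (by gcongr)
end
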